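/- Suppose f : 𝕊 → ℝ is Lipschitz continuous and μ is an absolutely continuous probability measure on 𝕊 whose density is strictly positive and Lipschitz continuous. Then the laws 𝐏ⁿ_μ of the random paths t ↦ ζₙ(x,t) on C⁰([0,1],ℝ) converge weakly, as n → ∞, to the point mass (Dirac measure) at the path ζ ∈ C⁰([0,1],ℝ) given by ζ(t) = ∫₀ᵗ μ̂ₛ(f) ds. -/

import Mathlib

open MeasureTheory Filter Topology Set UniformConvergence

noncomputable section

instance : Fact ((0:ℝ) < 1) := ⟨zero_lt_one⟩

/-- The circle `𝕊 = ℝ/ℤ`. -/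
abbrev Circle1 : Type := AddCircle (1 : ℝ)

/-- A `C²` expanding circle map with expansion `≥ lam` and `‖T''‖_∞ ≤ Astar`,
encoded by a lift `F : ℝ → ℝ` satisfying `F (x+1) = F x + deg`. -/
structure CM (lam Astar : ℝ) where
  F : ℝ → ℝ
  deg : ℤ
  lift_add_one : ∀ x : ℝ, F (x + 1) = F x + deg
  contDiff : ContDiff ℝ 2 F
  expanding : ∀ x : ℝ, lam ≤ deriv F x
  second_bound : ∀ x : ℝ, |deriv (deriv F) x| ≤ Astar

namespace CM

variable {lam Astar : ℝ}

/-- The induced map on the circle. -/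
def toMap (T : CM lam Astar) : Circle1 → Circle1 :=
  fun x => (↑(T.F ((AddCircle.equivIco 1 0 x : ℝ))) : Circle1)

/-- The derivative of `T`, as a function on the circle. -/
def dmap (T : CM lam Astar) : Circle1 → ℝ :=
  fun x => deriv T.F ((AddCircle.equivIco 1 0 x : ℝ))

end CM

/-- The `C¹` distance on the space of maps. -/
def dC1 {lam Astar : ℝ} (T₁ T₂ : CM lam Astar) : ℝ :=
  (⨆ x : Circle1, dist (T₁.toMap x) (T₂.toMap x)) + (⨆ x : Circle1, |T₁.dmap x - T₂.dmap x|)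

/-- The transfer operator `ℒ_T h (x) = ∑_{T y = x} h y / T' y`. -/
def transfer {lam Astar : ℝ} (T : CM lam Astar) (h : Circle1 → ℝ) : Circle1 → ℝ :=
  fun x => ∑' y : {y : Circle1 // T.toMap y = x}, h y / T.dmap y

/-- Iterated transfer operators `ℒ_k ⋯ ℒ_1` of the sequence `T_1, T_2, …` (`Ts i = T_i`). -/
def transferIter {lam Astar : ℝ} (Ts : ℕ → CM lam Astar) : ℕ → (Circle1 → ℝ) → (Circle1 → ℝ)
  | 0, h => h
  | (k+1), h => transfer (Ts (k+1)) (transferIter Ts k h)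

/-- Composition `T_k ∘ ⋯ ∘ T_1` as circle maps. -/
def mapIter {lam Astar : ℝ} (Ts : ℕ → CM lam Astar) : ℕ → Circle1 → Circle1
  | 0 => id
  | (k+1) => (Ts (k+1)).toMap ∘ mapIter Ts k

/-- Composition of the lifts `F_k ∘ ⋯ ∘ F_1`. -/
def liftIter {lam Astar : ℝ} (Ts : ℕ → CM lam Astar) : ℕ → ℝ → ℝ
  | 0 => id
  | (k+1) => (Ts (k+1)).F ∘ liftIter Ts k

/-- A real representative of `z`. -/
def zrep (z : Circle1) : ℝ := (AddCircle.equivIco 1 0 z : ℝ)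

/-- The coordinate on the cut circle `J_z = 𝕊 ∖ {z}`. -/
def arcCoord (z x : Circle1) : ℝ := ((AddCircle.equivIoc 1 (zrep z) x : ℝ))

/-- `|x − y|_z`: the length of the subarc of `J_z` connecting `x` and `y`. -/
def arcDist (z x y : Circle1) : ℝ := |arcCoord z x - arcCoord z y|

/-- `g` is Lipschitz on `J_z = 𝕊 ∖ {z}` with constant `L`. -/
def LipOnArc (z : Circle1) (L : ℝ) (g : Circle1 → ℝ) : Prop :=
  ∀ x y : Circle1, x ≠ z → y ≠ z → |g x - g y| ≤ L * arcDist z x y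

/-- A probability density w.r.t. the Haar–Lebesgue measure `𝔪` on the circle. -/
def IsProbDensity (ψ : Circle1 → ℝ) : Prop :=
  Integrable ψ volume ∧ (∫ x : Circle1, ψ x) = 1 ∧ ∀ x, 0 ≤ ψ x

/-- The class `𝒟_L`: positive probability densities whose logarithm is Lipschitz
with constant `L` on `J_z` for some `z`. -/
def memD (L : ℝ) (ψ : Circle1 → ℝ) : Prop :=
  IsProbDensity ψ ∧ (∀ x, 0 < ψ x) ∧ ∃ z : Circle1, LipOnArc z L (fun x => Real.log (ψ x))

/-- The `L¹(𝔪)` norm. -/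
def l1norm (h : Circle1 → ℝ) : ℝ := ∫ x : Circle1, |h x|

/-- The supremum norm. -/
def supNorm (h : Circle1 → ℝ) : ℝ := ⨆ x : Circle1, |h x|

/-- The Lipschitz constant of `h` (w.r.t. the metric of the circle). -/
def lipConst (h : Circle1 → ℝ) : ℝ :=
  sInf {L : ℝ | 0 ≤ L ∧ ∀ x y : Circle1, |h x - h y| ≤ L * dist x y}

/-- The Lipschitz norm `‖h‖_Lip = Lip(h) + ‖h‖_∞`. -/
def lipNorm (h : Circle1 → ℝ) : ℝ := lipConst h + supNorm h

/-- `ρ` is the density of the SRB measure of `T`: the density of a `T`-invariant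
probability measure equivalent to `𝔪`. -/
def IsSRBDensity {lam Astar : ℝ} (T : CM lam Astar) (ρ : Circle1 → ℝ) : Prop :=
  IsProbDensity ρ ∧ (∀ᵐ x : Circle1, 0 < ρ x) ∧
    Measure.map T.toMap (volume.withDensity (fun x => ENNReal.ofReal (ρ x))) =
      volume.withDensity (fun x => ENNReal.ofReal (ρ x))

section QDS

variable {lam Astar : ℝ}

/-- `x_{n,k} = T_{n,k} ∘ ⋯ ∘ T_{n,1}` for a triangular array. -/
def arrIter (Tarr : ℕ → ℕ → CM lam Astar) (n : ℕ) : ℕ → Circle1 → Circle1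
  | 0 => id
  | (k+1) => (Tarr n (k+1)).toMap ∘ arrIter Tarr n k

/-- `ℒ_{n,k} ⋯ ℒ_{n,1}` for a triangular array. -/
def arrTransfer (Tarr : ℕ → ℕ → CM lam Astar) (n : ℕ) : ℕ → (Circle1 → ℝ) → (Circle1 → ℝ)
  | 0, h => h
  | (k+1), h => transfer (Tarr n (k+1)) (arrTransfer Tarr n k h)

/-- `f_{n,k} = f ∘ T_{n,k} ∘ ⋯ ∘ T_{n,1}` evaluated at `x`. -/
def fnk (Tarr : ℕ → ℕ → CM lam Astar) (f : Circle1 → ℝ) (n k : ℕ) (x : Circle1) : ℝ :=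
  f (arrIter Tarr n k x)

/-- `ζₙ(x,t) = n⁻¹ (∑_{k<⌊nt⌋} f_{n,k}(x) + {nt}·f_{n,⌊nt⌋}(x))`. -/
def zetaP (Tarr : ℕ → ℕ → CM lam Astar) (f : Circle1 → ℝ) (n : ℕ) (x : Circle1) (t : ℝ) : ℝ :=
  (n : ℝ)⁻¹ * ((∑ k ∈ Finset.range ⌊(n : ℝ) * t⌋₊, fnk Tarr f n k x) +
    Int.fract ((n : ℝ) * t) * fnk Tarr f n ⌊(n : ℝ) * t⌋₊ x)

/-- `ξₙ(x,t) = √n ζₙ(x,t) − √n μ(ζₙ(·,t))` for a measure `μ`. -/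
def xiP (Tarr : ℕ → ℕ → CM lam Astar) (f : Circle1 → ℝ) (μ : Measure Circle1) (n : ℕ)
    (x : Circle1) (t : ℝ) : ℝ :=
  Real.sqrt n * zetaP Tarr f n x t - Real.sqrt n * ∫ y, zetaP Tarr f n y t ∂μ

/-- The Hölder continuity (exponent `η`) of the curve `γ` on `[0,1]`, w.r.t. `d_{C¹}`. -/
def HolderCurve (η : ℝ) (γ : ℝ → CM lam Astar) : Prop :=
  ∃ H : ℝ, ∀ s ∈ Icc (0:ℝ) 1, ∀ t ∈ Icc (0:ℝ) 1, dC1 (γ s) (γ t) ≤ H * |s - t| ^ η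

/-- The convergence-rate condition `sup_n n^η sup_t d_{C¹}(T_{n,⌊nt⌋}, γ_t) < ∞`. -/
def ArrayApprox (η : ℝ) (γ : ℝ → CM lam Astar) (Tarr : ℕ → ℕ → CM lam Astar) : Prop :=
  ∃ M : ℝ, ∀ n : ℕ, 1 ≤ n → ∀ t ∈ Icc (0:ℝ) 1,
    (n : ℝ) ^ η * dC1 (Tarr n ⌊(n : ℝ) * t⌋₊) (γ t) ≤ M

end QDS

/-- The path space: functions `[0,1] → ℝ` with the topology of uniform convergence;
continuous paths (with the supremum metric) embed isometrically. -/
abbrev PathSpace : Type := (Icc (0:ℝ) 1) →ᵤ ℝ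

instance : MeasurableSpace PathSpace := borel PathSpace

/-- A function `[0,1] → ℝ` (given as a function on `ℝ`) as a point of the path space. -/
def pathOf (g : ℝ → ℝ) : PathSpace := UniformFun.ofFun (fun t => g t)

/-- Evaluation of a path at time `t` (clamped to `[0,1]`). -/
def evalPath (t : ℝ) (ω : PathSpace) : ℝ := UniformFun.toFun ω (projIcc 0 1 zero_le_one t)


section Extra

variable {lam Astar : ℝ}

/-- `μ(ζₙ(·,t))` for the measure with density `ρ` w.r.t. `𝔪`. -/
def zetaMean (Tarr : ℕ → ℕ → CM lam Astar) (f : Circle1 → ℝ) (ρ : Circle1 → ℝ)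
    (n : ℕ) (t : ℝ) : ℝ :=
  ∫ y : Circle1, zetaP Tarr f n y t * ρ y

/-- `𝔪(ζₙ(·,t))`, the mean w.r.t. the Lebesgue measure. -/
def zetaMeanM (Tarr : ℕ → ℕ → CM lam Astar) (f : Circle1 → ℝ) (n : ℕ) (t : ℝ) : ℝ :=
  ∫ y : Circle1, zetaP Tarr f n y t

/-- `ξₙ(x,t) = √n ζₙ(x,t) − √n μ(ζₙ(·,t))`, where `μ` has density `ρ`. -/
def xiD (Tarr : ℕ → ℕ → CM lam Astar) (f : Circle1 → ℝ) (ρ : Circle1 → ℝ)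
    (n : ℕ) (x : Circle1) (t : ℝ) : ℝ :=
  Real.sqrt n * zetaP Tarr f n x t - Real.sqrt n * zetaMean Tarr f ρ n t

end Extra

/-- The σ-algebra `𝔉_t` on the path space, generated by the evaluations at times `s ∈ [0,t]`. -/
def pathFiltration (t : ℝ) : MeasurableSpace PathSpace :=
  ⨆ (s : ℝ) (_ : 0 ≤ s ∧ s ≤ t), MeasurableSpace.comap (evalPath s) (borel ℝ)

/-- The process `M_t(ω) = A(ω(t)) − A(ω(0)) − ½∫₀ᵗ σ̂ₛ²·A''(ω(s)) ds`. -/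
def MGproc (σ2 : ℝ → ℝ) (A : ℝ → ℝ) (t : ℝ) (ω : PathSpace) : ℝ :=
  A (evalPath t ω) - A (evalPath 0 ω) -
    (1/2) * ∫ s in (0:ℝ)..t, σ2 s * deriv (deriv A) (evalPath s ω)

/-- `P` solves the martingale problem on `C⁰([0,1],ℝ)` for the generator `½σ̂ₜ² d²/dx²`,
started at `0`:  `P` is a probability measure, concentrated on continuous paths starting at `0`,
and for every `A ∈ C_c^∞(ℝ)` the process `MGproc σ2 A` is a `P`-martingale w.r.t. the
natural filtration `𝔉_t`.  -/
def SolvesMartingaleProblem (σ2 : ℝ → ℝ) (P : Measure PathSpace) : Prop :=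
  IsProbabilityMeasure P ∧
  P {ω : PathSpace | evalPath 0 ω = 0} = 1 ∧
  P {ω : PathSpace | Continuous (UniformFun.toFun ω)} = 1 ∧
  ∀ A : ℝ → ℝ, ContDiff ℝ (⊤ : ℕ∞) A → HasCompactSupport A →
    (∀ t ∈ Icc (0:ℝ) 1, Integrable (MGproc σ2 A t) P) ∧
    (∀ t ∈ Icc (0:ℝ) 1, @Measurable PathSpace ℝ (pathFiltration t) _ (MGproc σ2 A t)) ∧
    (∀ s ∈ Icc (0:ℝ) 1, ∀ t ∈ Icc (0:ℝ) 1, s ≤ t →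
      P[MGproc σ2 A t | pathFiltration s] =ᵐ[P] MGproc σ2 A s)

end

/-!
Freezing the curve at time `t` turns a block of `N` consecutive factors of the composition into the
`N`-th iterate of the single map `γ t`, up to an error that vanishes as `n → ∞` with `N` fixed, so
the block average of `f` is close to a Birkhoff average of `γ t`. The Birkhoff averages converge in
mean because `γ t` is ergodic for its SRB measure: by bounded distortion, short branches of the
iterates show that an invariant set of positive measure has no density point of its complement.
That mean convergence concerns Lebesgue distributed initial points, whereas the blocks start at the
points `x_{n,k}`; but the push-forward of Lebesgue measure by any composition of the maps has
density at most `e ^ κ` with a uniform distortion constant `κ`. Summing the blocks gives a Riemann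
sum of `s ↦ μ̂ₛ(f)`, uniformly in the end point `t`. All of this is convergence in Lebesgue measure
towards a constant path, which passes to every absolutely continuous initial law.
-/

section ConvergenceInMeasure

variable {Ω E : Type*} [MeasurableSpace Ω] [PseudoEMetricSpace E]

theorem tendstoInMeasure_of_tendsto_lintegral_edist {ι : Type*} {P : Measure Ω} {l : Filter ι}
    {X : ι → Ω → E} {Y : Ω → E} (hX : ∀ i, AEMeasurable (fun ω => edist (X i ω) (Y ω)) P)
    (h : Tendsto (fun i => ∫⁻ ω, edist (X i ω) (Y ω) ∂P) l (𝓝 0)) :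
    TendstoInMeasure P X l Y := by
  intro ε hε
  rcases eq_or_ne ε ⊤ with rfl | hε_top
  · refine tendsto_of_tendsto_of_tendsto_of_le_of_le tendsto_const_nhds h (fun _ => zero_le)
      fun i => ?_
    rw [← one_mul (P _)]
    exact (mul_le_mul_left le_top _).trans (mul_meas_ge_le_lintegral₀ (hX i) ⊤)
  · have hdiv := ENNReal.Tendsto.div_const h (Or.inr hε.ne')
    rw [ENNReal.zero_div] at hdiv
    exact tendsto_of_tendsto_of_tendsto_of_le_of_le tendsto_const_nhds hdiv (fun _ => zero_le)
      fun i => meas_ge_le_lintegral_div (hX i) hε.ne' hε_top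

theorem tendsto_integral_comp_of_tendstoInMeasure {G : Type*} [NormedAddCommGroup G]
    [NormedSpace ℝ G] {P Q : Measure Ω} [IsFiniteMeasure Q] (hQP : Q ≪ P)
    {X : ℕ → Ω → E} {Y : Ω → E} (h : TendstoInMeasure P X atTop Y) {φ : E → G}
    (hφ : Continuous φ) (hX : ∀ n, AEStronglyMeasurable (fun ω => φ (X n ω)) Q) {B : ℝ}
    (hB : ∀ n ω, ‖φ (X n ω)‖ ≤ B) :
    Tendsto (fun n => ∫ ω, φ (X n ω) ∂Q) atTop (𝓝 (∫ ω, φ (Y ω) ∂Q)) := by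
  refine tendsto_of_subseq_tendsto fun ns hns => ?_
  obtain ⟨ms, -, hae⟩ := (h.comp hns).exists_seq_tendsto_ae
  refine ⟨ms, tendsto_integral_of_dominated_convergence (fun _ => B) (fun k => hX _)
    (integrable_const B) (fun k => Eventually.of_forall (hB _)) ?_⟩
  filter_upwards [hQP.ae_le hae] with ω hω using (hφ.tendsto _).comp hω

end ConvergenceInMeasure

section MeanErgodicTheorem

variable {X : Type*}

theorem norm_birkhoffSum_le {E : Type*} [SeminormedAddCommGroup E] (T : X → X) {g : X → E} {B : ℝ}
    (hB : ∀ x, ‖g x‖ ≤ B) (N : ℕ) (x : X) : ‖birkhoffSum T g N x‖ ≤ N * B := by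
  simpa [birkhoffSum] using norm_sum_le_of_le (Finset.range N) fun k _ => hB (T^[k] x)

theorem norm_birkhoffAverage_le {E : Type*} [SeminormedAddCommGroup E] [NormedSpace ℝ E]
    (T : X → X) {g : X → E} {B : ℝ} (hB : ∀ x, ‖g x‖ ≤ B) (N : ℕ) (x : X) :
    ‖birkhoffAverage ℝ T g N x‖ ≤ B := by
  rcases N.eq_zero_or_pos with rfl | hN
  · simpa using (norm_nonneg _).trans (hB x)
  · rw [birkhoffAverage, norm_smul, norm_inv, RCLike.norm_natCast,
      inv_mul_le_iff₀ (by positivity)]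
    exact norm_birkhoffSum_le T hB N x

theorem abs_birkhoffAverage_le {f : X → ℝ} {B : ℝ} (hB : ∀ x, |f x| ≤ B) (T : X → X) (N : ℕ)
    (x : X) : |birkhoffAverage ℝ T f N x| ≤ B :=
  norm_birkhoffAverage_le (g := f) T hB N x

variable [MeasurableSpace X] {μ : Measure X} {T : X → X}

theorem measurable_birkhoffAverage {g : X → ℝ} (hT : Measurable T) (hg : Measurable g) (N : ℕ) :
    Measurable (birkhoffAverage ℝ T g N) :=
  (Finset.measurable_fun_sum (Finset.range N) fun k _ => hg.comp (hT.iterate k)).const_smul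
    (N : ℝ)⁻¹

/-- The Koopman isometry `v ↦ v ∘ T` of `L²(μ)`. -/
noncomputable def koopman (hT : MeasurePreserving T μ μ) : Lp ℝ 2 μ →ₗᵢ[ℝ] Lp ℝ 2 μ :=
  Lp.compMeasurePreservingₗᵢ ℝ T hT

theorem coeFn_koopman (hT : MeasurePreserving T μ μ) (v : Lp ℝ 2 μ) : koopman hT v =ᵐ[μ] v ∘ T :=
  Lp.coeFn_compMeasurePreserving v hT

theorem coeFn_iterate_koopman (hT : MeasurePreserving T μ μ) (v : Lp ℝ 2 μ) (k : ℕ) :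
    (koopman hT)^[k] v =ᵐ[μ] v ∘ T^[k] := by
  induction k with
  | zero => rfl
  | succ k ih =>
    rw [Function.iterate_succ_apply', Function.iterate_succ]
    exact (coeFn_koopman hT _).trans (hT.quasiMeasurePreserving.ae_eq_comp ih)

theorem coeFn_birkhoffSum_koopman (hT : MeasurePreserving T μ μ) (v : Lp ℝ 2 μ) (N : ℕ) :
    (birkhoffSum (koopman hT) (fun w => w) N v : Lp ℝ 2 μ) =ᵐ[μ] birkhoffSum T v N := by
  induction N with
  | zero => exact Lp.coeFn_zero ℝ 2 μ
  | succ N ih =>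
    rw [birkhoffSum_succ]
    filter_upwards [Lp.coeFn_add (birkhoffSum (koopman hT) (fun w => w) N v) _, ih,
      coeFn_iterate_koopman hT v N] with x hadd hsum hiter
    rw [hadd, Pi.add_apply, hsum, hiter, birkhoffSum_succ, Function.comp_apply]

theorem coeFn_birkhoffAverage_koopman (hT : MeasurePreserving T μ μ) (v : Lp ℝ 2 μ) (N : ℕ) :
    (birkhoffAverage ℝ (koopman hT) (fun w => w) N v : Lp ℝ 2 μ) =ᵐ[μ] birkhoffAverage ℝ T v N := by
  filter_upwards [Lp.coeFn_smul (N : ℝ)⁻¹ (birkhoffSum (koopman hT) (fun w => w) N v),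
    coeFn_birkhoffSum_koopman hT v N] with x hsmul hsum
  rw [birkhoffAverage, hsmul, Pi.smul_apply, hsum, birkhoffAverage]

variable [IsProbabilityMeasure μ]

theorem koopman_const (hT : MeasurePreserving T μ μ) (a : ℝ) :
    koopman hT (Lp.const 2 μ a) = Lp.const 2 μ a := by
  refine Lp.ext ((coeFn_koopman hT _).trans ?_)
  have h_const := Lp.coeFn_const (p := 2) (μ := μ) a
  exact (hT.quasiMeasurePreserving.ae_eq_comp h_const).trans h_const.symm

theorem inner_const_one_left (v : Lp ℝ 2 μ) : inner ℝ (Lp.const 2 μ 1) v = ∫ x, v x ∂μ := by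
  rw [← indicatorConstLp_univ, L2.inner_indicatorConstLp_one, Measure.restrict_univ]

theorem koopman_eq_self_iff_of_ergodic (hT : Ergodic T μ) (v : Lp ℝ 2 μ) :
    koopman hT.toMeasurePreserving v = v ↔ v = Lp.const 2 μ (∫ x, v x ∂μ) := by
  refine ⟨fun hv => ?_, fun hv => hv ▸ koopman_const _ _⟩
  have h_comp := coeFn_koopman hT.toMeasurePreserving v
  rw [hv] at h_comp
  obtain ⟨c, hc⟩ := hT.ae_eq_const_of_ae_eq_comp_ae (Lp.aestronglyMeasurable v) h_comp.symm
  have h_int : ∫ x, v x ∂μ = c := by simp [integral_congr_ae hc]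
  rw [h_int]
  exact Lp.ext (hc.trans (Lp.coeFn_const (p := 2) (μ := μ) c).symm)

-- The limit is the orthogonal projection onto the invariant vectors, which are the constants;
-- pairing with the invariant vector `1` identifies which constant it is.
theorem tendsto_birkhoffAverage_koopman_of_ergodic (hT : Ergodic T μ) (v : Lp ℝ 2 μ) :
    Tendsto (birkhoffAverage ℝ (koopman hT.toMeasurePreserving) (fun w => w) · v) atTop
      (𝓝 (Lp.const 2 μ (∫ x, v x ∂μ))) := by
  set U := (koopman hT.toMeasurePreserving).toContinuousLinearMap
  set V := U.eqLocus (1 : Lp ℝ 2 μ →L[ℝ] Lp ℝ 2 μ)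
  have h_proj := U.tendsto_birkhoffAverage_orthogonalProjection
    (koopman hT.toMeasurePreserving).norm_toContinuousLinearMap_le v
  have one_mem : Lp.const 2 μ (1 : ℝ) ∈ V := koopman_const _ 1
  have h_const := (koopman_eq_self_iff_of_ergodic hT _).1 (V.orthogonalProjectionOnto v).2
  have h_mean : ∫ x, (V.orthogonalProjectionOnto v : Lp ℝ 2 μ) x ∂μ = ∫ x, v x ∂μ := by
    rw [← inner_const_one_left, ← inner_const_one_left]
    exact Submodule.inner_orthogonalProjectionOnto_eq_of_mem_left ⟨_, one_mem⟩ v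
  rwa [h_const, h_mean] at h_proj

theorem tendstoInMeasure_birkhoffAverage_of_ergodic (hT : Ergodic T μ) {g : X → ℝ}
    (hg : MemLp g 2 μ) :
    TendstoInMeasure μ (birkhoffAverage ℝ T g) atTop fun _ => ∫ x, g x ∂μ := by
  have h_lim := tendstoInMeasure_of_tendsto_Lp
    (tendsto_birkhoffAverage_koopman_of_ergodic hT (hg.toLp g))
  have h_avg (N : ℕ) : birkhoffAverage ℝ T (hg.toLp g) N =ᵐ[μ] birkhoffAverage ℝ T g N :=
    hT.toMeasurePreserving.quasiMeasurePreserving.birkhoffAverage_ae_eq_of_ae_eq ℝ hg.coeFn_toLp N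
  refine h_lim.congr' (Eventually.of_forall fun N => ?_) ?_
  · exact (coeFn_birkhoffAverage_koopman hT.toMeasurePreserving _ N).trans (h_avg N)
  · rw [integral_congr_ae hg.coeFn_toLp]
    exact Lp.coeFn_const (p := 2) (μ := μ) _

theorem tendsto_integral_abs_birkhoffAverage_sub_of_ergodic {m : Measure X} [IsFiniteMeasure m]
    (hm : m ≪ μ) (hT : Ergodic T μ) {g : X → ℝ} (hg : Measurable g) {B : ℝ}
    (hB : ∀ x, ‖g x‖ ≤ B) :
    Tendsto (fun N => ∫ x, |birkhoffAverage ℝ T g N x - ∫ y, g y ∂μ| ∂m) atTop (𝓝 0) := by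
  have hL2 : MemLp g 2 μ := .of_bound hg.aestronglyMeasurable B (Eventually.of_forall hB)
  have h_meas (N : ℕ) : AEStronglyMeasurable
      (fun x => |birkhoffAverage ℝ T g N x - ∫ y, g y ∂μ|) m :=
    ((measurable_birkhoffAverage hT.measurable hg N).sub_const _).abs.aestronglyMeasurable
  have h_bound (N : ℕ) (x : X) :
      ‖|birkhoffAverage ℝ T g N x - ∫ y, g y ∂μ|‖ ≤ B + |∫ y, g y ∂μ| := by
    rw [Real.norm_eq_abs, abs_abs]
    exact (abs_sub _ _).trans (add_le_add_left (norm_birkhoffAverage_le T hB N x) _)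
  simpa using tendsto_integral_comp_of_tendstoInMeasure hm
    (tendstoInMeasure_birkhoffAverage_of_ergodic hT hL2) (φ := fun y => |y - ∫ x, g x ∂μ|)
    (by fun_prop) h_meas h_bound

end MeanErgodicTheorem

section Density

variable {Ω : Type*} [MeasurableSpace Ω] {m : Measure Ω} {ψ : Ω → ℝ}

theorem integral_withDensity_ofReal {G : Type*} [NormedAddCommGroup G] [NormedSpace ℝ G]
    (hψ : AEMeasurable ψ m) (h0 : ∀ ω, 0 ≤ ψ ω) (g : Ω → G) :
    ∫ ω, g ω ∂m.withDensity (fun ω => ENNReal.ofReal (ψ ω)) = ∫ ω, ψ ω • g ω ∂m := by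
  rw [integral_withDensity_eq_integral_toReal_smul₀ hψ.ennreal_ofReal
    (Eventually.of_forall fun _ => ENNReal.ofReal_lt_top)]
  simp only [ENNReal.toReal_ofReal (h0 _)]

theorem isProbabilityMeasure_withDensity_ofReal (hψ : Integrable ψ m) (h0 : ∀ ω, 0 ≤ ψ ω)
    (h1 : ∫ ω, ψ ω ∂m = 1) :
    IsProbabilityMeasure (m.withDensity fun ω => ENNReal.ofReal (ψ ω)) where
  measure_univ := by
    rw [withDensity_apply _ MeasurableSet.univ, Measure.restrict_univ,
      ← ofReal_integral_eq_lintegral_ofReal hψ (Eventually.of_forall h0), h1, ENNReal.ofReal_one]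

end Density

theorem floor_natCast_mul_le (n : ℕ) {t : ℝ} (ht : t ≤ 1) : ⌊(n : ℝ) * t⌋₊ ≤ n :=
  Nat.floor_le_of_le (mul_le_of_le_one_right n.cast_nonneg ht)

theorem floor_natCast_mul_div_mem_Icc {n : ℕ} (hn : 0 < n) {t : ℝ} (ht : 0 ≤ t) :
    (⌊(n : ℝ) * t⌋₊ / n : ℝ) ∈ Icc (t - 1 / n) t := by
  have hn0 : (0 : ℝ) < n := by exact_mod_cast hn
  refine ⟨?_, (div_le_iff₀' hn0).2 (Nat.floor_le (mul_nonneg hn0.le ht))⟩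
  rw [sub_le_iff_le_add, ← add_div, le_div_iff₀' hn0]
  exact (Nat.lt_floor_add_one _).le

section RiemannSums

variable {E : Type*} [NormedAddCommGroup E] [NormedSpace ℝ E] [CompleteSpace E] {g : ℝ → E}

theorem norm_smul_sub_intervalIntegral_le {a b ε : ℝ} {v : E} (hab : a ≤ b)
    (hg : IntervalIntegrable g volume a b) (h : ∀ s ∈ Icc a b, ‖v - g s‖ ≤ ε) :
    ‖(b - a) • v - ∫ s in a..b, g s‖ ≤ ε * (b - a) := by
  rw [← intervalIntegral.integral_const, ← intervalIntegral.integral_sub (by simp) hg]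
  have := intervalIntegral.norm_integral_le_of_norm_le_const (f := fun s => v - g s) (C := ε)
    fun s hs => h s (Ioc_subset_Icc_self (uIoc_of_le hab ▸ hs))
  rwa [abs_of_nonneg (sub_nonneg.2 hab)] at this

theorem norm_riemannSum_sub_intervalIntegral_le {n m : ℕ} {δ ε : ℝ}
    (hg : ContinuousOn g (Icc 0 1))
    (h_osc : ∀ s ∈ Icc (0 : ℝ) 1, ∀ t ∈ Icc (0 : ℝ) 1, dist s t < δ → dist (g s) (g t) ≤ ε)
    (hn : 1 / (n : ℝ) < δ) (hmn : m ≤ n) (hn0 : 0 < n) :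
    ‖(n : ℝ)⁻¹ • ∑ k ∈ Finset.range m, g (k / n) - ∫ s in (0 : ℝ)..(m / n : ℝ), g s‖
      ≤ ε * (m / n) := by
  have mem_Icc {k : ℕ} (hk : k ≤ n) : (k / n : ℝ) ∈ Icc (0 : ℝ) 1 :=
    ⟨by positivity, div_le_one_of_le₀ (by exact_mod_cast hk) n.cast_nonneg⟩
  have h_step (k : ℕ) : ((k + 1 : ℕ) / n : ℝ) - k / n = (n : ℝ)⁻¹ := by push_cast; ring
  have h_le (k : ℕ) : (k / n : ℝ) ≤ (k + 1 : ℕ) / n := by gcongr; simp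
  have h_cell_subset {k : ℕ} (hk : k < m) :
      Icc (k / n : ℝ) ((k + 1 : ℕ) / n) ⊆ Icc (0 : ℝ) 1 :=
    Icc_subset_Icc (mem_Icc (by omega)).1 (mem_Icc (by omega)).2
  have h_int {k : ℕ} (hk : k < m) :
      IntervalIntegrable g volume (k / n) ((k + 1 : ℕ) / n) :=
    (hg.mono (by rw [uIcc_of_le (h_le k)]; exact h_cell_subset hk)).intervalIntegrable
  have h_cell (k : ℕ) (hk : k ∈ Finset.range m) :
      ‖(n : ℝ)⁻¹ • g (k / n) - ∫ s in (k / n : ℝ)..((k + 1 : ℕ) / n : ℝ), g s‖ ≤ ε * (n : ℝ)⁻¹ := by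
    have hk' := Finset.mem_range.1 hk
    rw [← h_step k]
    refine norm_smul_sub_intervalIntegral_le (h_le k) (h_int hk') fun s hs => ?_
    rw [← dist_eq_norm]
    refine h_osc _ (mem_Icc (by omega)) _ (h_cell_subset hk' hs) (lt_of_le_of_lt ?_ hn)
    rw [dist_comm, Real.dist_eq, abs_of_nonneg (sub_nonneg.2 hs.1), one_div]
    linarith [hs.2, h_step k]
  have h_sum := intervalIntegral.sum_integral_adjacent_intervals (f := g) (μ := volume)
    (a := fun k : ℕ => (k / n : ℝ)) (n := m) fun k hk => h_int hk
  rw [Nat.cast_zero, zero_div] at h_sum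
  rw [← h_sum, Finset.smul_sum, ← Finset.sum_sub_distrib]
  refine (norm_sum_le_of_le _ h_cell).trans (le_of_eq ?_)
  rw [Finset.sum_const, Finset.card_range, nsmul_eq_mul]
  ring

theorem tendstoUniformlyOn_riemannSum (hg : ContinuousOn g (Icc 0 1)) :
    TendstoUniformlyOn
      (fun (n : ℕ) (t : ℝ) => (n : ℝ)⁻¹ • ∑ k ∈ Finset.range ⌊(n : ℝ) * t⌋₊, g (k / n))
      (fun t => ∫ s in (0 : ℝ)..t, g s) atTop (Icc 0 1) := by
  rw [Metric.tendstoUniformlyOn_iff]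
  intro ε hε
  obtain ⟨B, hB⟩ := isCompact_Icc.exists_bound_of_continuousOn hg
  obtain ⟨δ, hδ, h_osc⟩ := Metric.uniformContinuousOn_iff.1
    (isCompact_Icc.uniformContinuousOn_of_continuous hg) (ε / 2) (by positivity)
  have h_mesh : ∀ᶠ n : ℕ in atTop, 1 / (n : ℝ) < δ :=
    tendsto_one_div_atTop_nhds_zero_nat.eventually_lt_const hδ
  have h_last : ∀ᶠ n : ℕ in atTop, B / (n : ℝ) < ε / 2 :=
    (tendsto_const_div_atTop_nhds_zero_nat B).eventually_lt_const (by positivity)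
  filter_upwards [h_mesh, h_last, eventually_gt_atTop 0] with n h_mesh h_last hn t ht
  set m := ⌊(n : ℝ) * t⌋₊
  obtain ⟨htm, hmt⟩ : (m / n : ℝ) ∈ Icc (t - 1 / n) t := floor_natCast_mul_div_mem_Icc hn ht.1
  have h_sub : uIcc 0 (m / n : ℝ) ⊆ Icc 0 1 := by
    rw [uIcc_of_le (by positivity)]
    exact Icc_subset_Icc_right (hmt.trans ht.2)
  have h_sub' : uIcc (m / n : ℝ) t ⊆ Icc 0 1 := by
    rw [uIcc_of_le hmt]
    exact Icc_subset_Icc (by positivity) ht.2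
  have h_main := norm_riemannSum_sub_intervalIntegral_le hg
    (fun s hs t ht h => (h_osc s hs t ht h).le) h_mesh (floor_natCast_mul_le n ht.2) hn
  have h_tail : ‖∫ s in (m / n : ℝ)..t, g s‖ ≤ B * (t - m / n) := by
    have := intervalIntegral.norm_integral_le_of_norm_le_const (f := g)
      fun s hs => hB s (h_sub' (uIoc_subset_uIcc hs))
    rwa [abs_of_nonneg (sub_nonneg.2 hmt)] at this
  have hB0 : 0 ≤ B := (norm_nonneg _).trans (hB t ht)
  rw [← intervalIntegral.integral_add_adjacent_intervals (hg.mono h_sub).intervalIntegrable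
    (hg.mono h_sub').intervalIntegrable, dist_eq_norm', ← sub_sub]
  calc _ ≤ ε / 2 * (m / n) + B * (t - m / n) := norm_sub_le_of_le h_main h_tail
    _ ≤ ε / 2 * 1 + B * (1 / n) := by gcongr; exacts [hmt.trans ht.2, sub_le_comm.1 htm]
    _ < ε := by rw [mul_one_div]; linarith

end RiemannSums

section BlockAverages

variable {E : Type*} [SeminormedAddCommGroup E] {F : ℕ → E} {B : ℝ}

theorem norm_sum_range_sub_sum_range_add_le (hB : ∀ k, ‖F k‖ ≤ B) (m i : ℕ) :
    ‖∑ k ∈ Finset.range m, F k - ∑ k ∈ Finset.range m, F (k + i)‖ ≤ 2 * B * i := by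
  have h_split : ∑ k ∈ Finset.range m, F k - ∑ k ∈ Finset.range m, F (k + i) =
      ∑ k ∈ Finset.range i, (F k - F (m + k)) := by
    have h := Finset.sum_range_add F m i
    rw [add_comm m i, Finset.sum_range_add F i m] at h
    simp only [add_comm _ i, Finset.sum_sub_distrib]
    rw [sub_eq_sub_iff_add_eq_add, h]
  rw [h_split]
  refine (norm_sum_le_of_le _ fun k _ => norm_sub_le_of_le (hB k) (hB (m + k))).trans
    (le_of_eq ?_)
  rw [Finset.sum_const, Finset.card_range, nsmul_eq_mul]
  ring

theorem norm_sum_range_sub_sum_blockAverage_le [NormedSpace ℝ E] (hB : ∀ k, ‖F k‖ ≤ B) (m : ℕ)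
    {N : ℕ} (hN : 0 < N) :
    ‖∑ k ∈ Finset.range m, F k -
      ∑ k ∈ Finset.range m, (N : ℝ)⁻¹ • ∑ i ∈ Finset.range N, F (k + i)‖ ≤ 2 * B * N := by
  have hN0 : (0 : ℝ) < N := by exact_mod_cast hN
  have hB0 : 0 ≤ B := (norm_nonneg _).trans (hB 0)
  have h_swap : ∑ k ∈ Finset.range m, F k -
      ∑ k ∈ Finset.range m, (N : ℝ)⁻¹ • ∑ i ∈ Finset.range N, F (k + i) = (N : ℝ)⁻¹ •
        ∑ i ∈ Finset.range N, (∑ k ∈ Finset.range m, F k - ∑ k ∈ Finset.range m, F (k + i)) := by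
    rw [Finset.sum_sub_distrib, Finset.sum_const, Finset.card_range, smul_sub,
      ← Nat.cast_smul_eq_nsmul ℝ, inv_smul_smul₀ hN0.ne', ← Finset.smul_sum, Finset.sum_comm]
  have h_shift (i : ℕ) (hi : i ∈ Finset.range N) :
      ‖∑ k ∈ Finset.range m, F k - ∑ k ∈ Finset.range m, F (k + i)‖ ≤ 2 * B * N :=
    (norm_sum_range_sub_sum_range_add_le hB m i).trans
      (by gcongr; exact (Finset.mem_range.1 hi).le)
  rw [h_swap, norm_smul, norm_inv, RCLike.norm_natCast, inv_mul_le_iff₀ hN0]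
  simpa using norm_sum_le_of_le _ h_shift

end BlockAverages

/-- The time-`t` value of the polygonal path with vertices `(m/n, n⁻¹ ∑_{k<m} F k)`; for
`F k = f_{n,k}(x)` this is the path `ζₙ(x, ·)`. -/
noncomputable def polygonalPath (n : ℕ) (F : ℕ → ℝ) (t : ℝ) : ℝ :=
  (n : ℝ)⁻¹ * ((∑ k ∈ Finset.range ⌊(n : ℝ) * t⌋₊, F k) +
    Int.fract ((n : ℝ) * t) * F ⌊(n : ℝ) * t⌋₊)

theorem abs_polygonalPath_sub_le {F : ℕ → ℝ} {B : ℝ} (hB : ∀ k, |F k| ≤ B) (n : ℕ) (t : ℝ) :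
    |polygonalPath n F t - (n : ℝ)⁻¹ * ∑ k ∈ Finset.range ⌊(n : ℝ) * t⌋₊, F k| ≤ B / n := by
  have h_term : |Int.fract ((n : ℝ) * t) * F ⌊(n : ℝ) * t⌋₊| ≤ 1 * B := by
    rw [abs_mul, abs_of_nonneg (Int.fract_nonneg _)]
    gcongr
    exacts [(Int.fract_lt_one _).le, hB _]
  rw [polygonalPath, mul_add, add_sub_cancel_left, abs_mul, abs_of_nonneg (by positivity),
    div_eq_inv_mul]
  gcongr
  rwa [one_mul] at h_term

section Iterates

variable {S X : Type*} [TopologicalSpace S] [TopologicalSpace X] {Γ : S → X → X}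

theorem continuous_iterate_uncurry (hΓ : Continuous (Function.uncurry Γ)) (k : ℕ) :
    Continuous fun p : S × X => (Γ p.1)^[k] p.2 := by
  induction k with
  | zero => exact continuous_snd
  | succ k ih =>
    simp only [Function.iterate_succ_apply']
    exact hΓ.comp (continuous_fst.prodMk ih)

theorem continuous_birkhoffAverage_uncurry (hΓ : Continuous (Function.uncurry Γ)) {f : X → ℝ}
    (hf : Continuous f) (N : ℕ) :
    Continuous fun p : S × X => birkhoffAverage ℝ (Γ p.1) f N p.2 := by
  simp only [birkhoffAverage, birkhoffSum]
  exact continuous_const.mul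
    (continuous_finsetSum _ fun k _ => hf.comp (continuous_iterate_uncurry hΓ k))

end Iterates

section BlockMean

variable {X : Type*} [MeasurableSpace X]

/-- The space average of the `N`-th Birkhoff average of `f` under `T`. -/
noncomputable def blockMean (m : Measure X) (T : X → X) (f : X → ℝ) (N : ℕ) : ℝ :=
  ∫ x, birkhoffAverage ℝ T f N x ∂m

/-- The mean absolute deviation of the `N`-th Birkhoff average of `f` under `T` from its space
average. -/
noncomputable def blockDeviation (m : Measure X) (T : X → X) (f : X → ℝ) (N : ℕ) : ℝ :=
  ∫ x, |birkhoffAverage ℝ T f N x - blockMean m T f N| ∂m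

variable {m : Measure X} [IsProbabilityMeasure m] {f : X → ℝ} {B : ℝ}

theorem abs_integral_le_of_abs_le {g : X → ℝ} (hg : ∀ x, |g x| ≤ B) : |∫ x, g x ∂m| ≤ B := by
  simpa using norm_integral_le_of_norm_le_const (μ := m) (f := g) (C := B)
    (Eventually.of_forall hg)

theorem abs_blockMean_le (hB : ∀ x, |f x| ≤ B) (T : X → X) (N : ℕ) : |blockMean m T f N| ≤ B :=
  abs_integral_le_of_abs_le (abs_birkhoffAverage_le hB T N)

theorem abs_birkhoffAverage_sub_blockMean_le (hB : ∀ x, |f x| ≤ B) (T : X → X) (N : ℕ) (x : X) :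
    |birkhoffAverage ℝ T f N x - blockMean m T f N| ≤ 2 * B := by
  rw [two_mul]
  exact (abs_sub _ _).trans
    (add_le_add (abs_birkhoffAverage_le hB T N x) (abs_blockMean_le hB T N))

theorem abs_blockDeviation_le (hB : ∀ x, |f x| ≤ B) (T : X → X) (N : ℕ) :
    |blockDeviation m T f N| ≤ 2 * B :=
  abs_integral_le_of_abs_le fun x =>
    (abs_abs _).trans_le (abs_birkhoffAverage_sub_blockMean_le hB T N x)

section FixedMap

variable {T : X → X} {c : ℝ}

theorem integrable_birkhoffAverage (hT : Measurable T) (hf : Measurable f)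
    (hB : ∀ x, |f x| ≤ B) (N : ℕ) : Integrable (birkhoffAverage ℝ T f N) m :=
  .of_bound (measurable_birkhoffAverage hT hf N).aestronglyMeasurable B
    (Eventually.of_forall (abs_birkhoffAverage_le hB T N))

theorem abs_blockMean_sub_le (hT : Measurable T) (hf : Measurable f) (hB : ∀ x, |f x| ≤ B)
    (N : ℕ) (c : ℝ) :
    |blockMean m T f N - c| ≤ ∫ x, |birkhoffAverage ℝ T f N x - c| ∂m := by
  have h_eq : blockMean m T f N - c = ∫ x, (birkhoffAverage ℝ T f N x - c) ∂m := by
    rw [integral_sub (integrable_birkhoffAverage hT hf hB N) (integrable_const c)]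
    simp [blockMean]
  rw [h_eq]
  exact abs_integral_le_integral_abs

theorem blockDeviation_le (hT : Measurable T) (hf : Measurable f) (hB : ∀ x, |f x| ≤ B)
    (N : ℕ) (c : ℝ) :
    blockDeviation m T f N ≤ 2 * ∫ x, |birkhoffAverage ℝ T f N x - c| ∂m := by
  have h_int := integrable_birkhoffAverage (m := m) hT hf hB N
  have h_int_sub : Integrable (fun x => |birkhoffAverage ℝ T f N x - c|) m :=
    (h_int.sub (integrable_const c)).abs
  calc blockDeviation m T f N
      ≤ ∫ x, (|birkhoffAverage ℝ T f N x - c| + |blockMean m T f N - c|) ∂m := by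
        refine integral_mono (h_int.sub (integrable_const _)).abs
          (h_int_sub.add (integrable_const _)) fun x => ?_
        rw [abs_sub_comm (blockMean m T f N)]
        exact abs_sub_le _ _ _
    _ = ∫ x, |birkhoffAverage ℝ T f N x - c| ∂m + |blockMean m T f N - c| := by
        rw [integral_add h_int_sub (integrable_const _)]
        simp
    _ ≤ 2 * ∫ x, |birkhoffAverage ℝ T f N x - c| ∂m := by
        rw [two_mul]
        gcongr
        exact abs_blockMean_sub_le hT hf hB N c

theorem tendsto_blockMean (hT : Measurable T) (hf : Measurable f) (hB : ∀ x, |f x| ≤ B)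
    (hc : Tendsto (fun N => ∫ x, |birkhoffAverage ℝ T f N x - c| ∂m) atTop (𝓝 0)) :
    Tendsto (blockMean m T f) atTop (𝓝 c) :=
  tendsto_iff_norm_sub_tendsto_zero.2
    (squeeze_zero (fun _ => abs_nonneg _) (fun N => abs_blockMean_sub_le hT hf hB N c) hc)

theorem tendsto_blockDeviation (hT : Measurable T) (hf : Measurable f) (hB : ∀ x, |f x| ≤ B)
    (hc : Tendsto (fun N => ∫ x, |birkhoffAverage ℝ T f N x - c| ∂m) atTop (𝓝 0)) :
    Tendsto (blockDeviation m T f) atTop (𝓝 0) :=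
  squeeze_zero (fun _ => integral_nonneg fun _ => abs_nonneg _)
    (fun N => blockDeviation_le hT hf hB N c) (by simpa using hc.const_mul 2)

end FixedMap

section Family

variable {S : Type*} [TopologicalSpace S] [FirstCountableTopology S] [TopologicalSpace X]
  [OpensMeasurableSpace X] {Γ : S → X → X}

theorem continuous_blockMean (hΓ : Continuous (Function.uncurry Γ)) (hf : Continuous f)
    (hB : ∀ x, |f x| ≤ B) (N : ℕ) : Continuous fun t => blockMean m (Γ t) f N := by
  have h_avg := continuous_birkhoffAverage_uncurry hΓ hf N
  exact continuous_of_dominated (bound := fun _ => B)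
    (fun t => (h_avg.comp (Continuous.prodMk_right t)).measurable.aestronglyMeasurable)
    (fun t => Eventually.of_forall (abs_birkhoffAverage_le hB (Γ t) N))
    (integrable_const B)
    (Eventually.of_forall fun x => h_avg.comp (Continuous.prodMk_left x))

theorem continuous_blockDeviation (hΓ : Continuous (Function.uncurry Γ)) (hf : Continuous f)
    (hB : ∀ x, |f x| ≤ B) (N : ℕ) : Continuous fun t => blockDeviation m (Γ t) f N := by
  have h_avg := continuous_birkhoffAverage_uncurry hΓ hf N
  have h_mean := continuous_blockMean (m := m) hΓ hf hB N
  exact continuous_of_dominated (bound := fun _ => 2 * B)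
    (fun t => ((h_avg.comp (Continuous.prodMk_right t)).sub
      continuous_const).abs.measurable.aestronglyMeasurable)
    (fun t => Eventually.of_forall fun x => by
      simpa using abs_birkhoffAverage_sub_blockMean_le hB (Γ t) N x)
    (integrable_const _)
    (Eventually.of_forall fun x => ((h_avg.comp (Continuous.prodMk_left x)).sub h_mean).abs)

end Family

end BlockMean

section QuasistaticOrbit

variable {X Ω : Type*} [PseudoMetricSpace X] {Γ : ℝ → X → X} {orb : ℕ → ℕ → Ω → X}

/-- A triangular array of random orbits shadows the curve of maps `Γ` if, as `n → ∞`, its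
`(k+1)`-st step is uniformly close to the action of `Γ ((k+1)/n)`. -/
def IsQuasistaticOrbit (Γ : ℝ → X → X) (orb : ℕ → ℕ → Ω → X) : Prop :=
  ∀ ε > 0, ∀ᶠ n : ℕ in atTop, ∀ k ω,
    dist (orb n (k + 1) ω) (Γ ((k + 1 : ℕ) / n) (orb n k ω)) < ε

theorem IsQuasistaticOrbit.eventually_dist_iterate_lt (h : IsQuasistaticOrbit Γ orb)
    (hΓ : UniformContinuous (Function.uncurry Γ)) (i : ℕ) {ε : ℝ} (hε : 0 < ε) :
    ∀ᶠ n : ℕ in atTop, ∀ k ω,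
      dist (orb n (k + i) ω) ((Γ (k / n))^[i] (orb n k ω)) < ε := by
  induction i generalizing ε with
  | zero => simp [hε]
  | succ i ih =>
    obtain ⟨δ, hδ, h_unif⟩ := Metric.uniformContinuous_iff.1 hΓ (ε / 2) (by positivity)
    have h_time : ∀ᶠ n : ℕ in atTop, (i + 1 : ℕ) / (n : ℝ) < δ :=
      (tendsto_const_div_atTop_nhds_zero_nat _).eventually_lt_const hδ
    filter_upwards [h (ε / 2) (by positivity), ih hδ, h_time] with n h_step h_ih h_time k ω
    have h_time' : dist ((k + i + 1 : ℕ) / n : ℝ) (k / n) < δ := by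
      rw [add_assoc, Nat.cast_add, add_div, Real.dist_eq, add_sub_cancel_left,
        abs_of_nonneg (by positivity)]
      exact h_time
    have h_map := @h_unif (_, _) (_, _) (max_lt h_time' (h_ih k ω))
    rw [Function.iterate_succ_apply']
    exact (dist_triangle _ _ _).trans_lt ((add_lt_add (h_step (k + i) ω) h_map).trans_eq
      (add_halves ε))

theorem IsQuasistaticOrbit.eventually_abs_blockAverage_sub_le (h : IsQuasistaticOrbit Γ orb)
    (hΓ : UniformContinuous (Function.uncurry Γ)) {f : X → ℝ} (hf : UniformContinuous f)
    (N : ℕ) {ε : ℝ} (hε : 0 < ε) :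
    ∀ᶠ n : ℕ in atTop, ∀ k ω,
      |(N : ℝ)⁻¹ • ∑ i ∈ Finset.range N, f (orb n (k + i) ω) -
        birkhoffAverage ℝ (Γ (k / n)) f N (orb n k ω)| ≤ ε := by
  obtain ⟨δ, hδ, h_unif⟩ := Metric.uniformContinuous_iff.1 hf ε hε
  filter_upwards [(Filter.eventually_all_finset (Finset.range N)).2
    fun i _ => h.eventually_dist_iterate_lt hΓ i hδ] with n h_close k ω
  have h_sum := dist_sum_sum_le_of_le (Finset.range N) fun i hi => (h_unif (h_close i hi k ω)).le
  rw [Finset.sum_const, Finset.card_range, nsmul_eq_mul, Real.dist_eq] at h_sum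
  rw [birkhoffAverage, birkhoffSum, ← smul_sub, smul_eq_mul, abs_mul,
    abs_of_nonneg (by positivity)]
  exact (mul_le_mul_of_nonneg_left h_sum (by positivity)).trans
    (by rw [← mul_assoc]; exact mul_le_of_le_one_left hε.le inv_mul_le_one)

end QuasistaticOrbit

theorem abs_polygonalPath_sub_sum_le {F v b : ℕ → ℝ} {B ε : ℝ} {n N : ℕ} (hN : 0 < N)
    (hB : ∀ k, |F k| ≤ B)
    (hv : ∀ k, |(N : ℝ)⁻¹ • ∑ i ∈ Finset.range N, F (k + i) - v k| ≤ ε) {t : ℝ} (ht : t ≤ 1) :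
    |polygonalPath n F t - (n : ℝ)⁻¹ • ∑ k ∈ Finset.range ⌊(n : ℝ) * t⌋₊, b k| ≤
      (B + 2 * B * N) / n + ε + (n : ℝ)⁻¹ * ∑ k ∈ Finset.range n, |v k - b k| := by
  set m := ⌊(n : ℝ) * t⌋₊
  have hmn : m ≤ n := floor_natCast_mul_le n ht
  have hε : 0 ≤ ε := (abs_nonneg _).trans (hv 0)
  have h_sum : |∑ k ∈ Finset.range m, F k - ∑ k ∈ Finset.range m, b k| ≤
      2 * B * N + n * ε + ∑ k ∈ Finset.range n, |v k - b k| := by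
    have h_block := norm_sum_range_sub_sum_blockAverage_le (F := F) hB m hN
    have h_dev : |∑ k ∈ Finset.range m, (N : ℝ)⁻¹ • ∑ i ∈ Finset.range N, F (k + i) -
        ∑ k ∈ Finset.range m, v k| ≤ n * ε := by
      rw [← Finset.sum_sub_distrib]
      refine (Finset.abs_sum_le_sum_abs _ _).trans
        ((Finset.sum_le_sum fun k _ => hv k).trans ?_)
      rw [Finset.sum_const, Finset.card_range, nsmul_eq_mul]
      gcongr
    have h_mean : |∑ k ∈ Finset.range m, v k - ∑ k ∈ Finset.range m, b k| ≤
        ∑ k ∈ Finset.range n, |v k - b k| := by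
      rw [← Finset.sum_sub_distrib]
      exact (Finset.abs_sum_le_sum_abs _ _).trans
        (Finset.sum_le_sum_of_subset_of_nonneg (Finset.range_subset_range.2 hmn)
          fun _ _ _ => abs_nonneg _)
    exact (abs_sub_le _ _ _).trans (add_le_add ((abs_sub_le _ _ _).trans
      (add_le_add h_block h_dev)) h_mean)
  have h_poly := abs_polygonalPath_sub_le hB n t
  have h_scaled : |(n : ℝ)⁻¹ * ∑ k ∈ Finset.range m, F k - (n : ℝ)⁻¹ * ∑ k ∈ Finset.range m, b k| ≤
      (n : ℝ)⁻¹ * (2 * B * N + n * ε + ∑ k ∈ Finset.range n, |v k - b k|) := by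
    rw [← mul_sub, abs_mul, abs_of_nonneg (by positivity)]
    gcongr
  have h_ε : (n : ℝ)⁻¹ * n * ε ≤ ε := mul_le_of_le_one_left hε inv_mul_le_one
  rw [smul_eq_mul]
  refine (abs_sub_le _ _ _).trans ((add_le_add h_poly h_scaled).trans ?_)
  rw [add_div, div_eq_inv_mul, div_eq_inv_mul]
  linarith

theorem edist_pathOf_le {g₁ g₂ : ℝ → ℝ} {R : ℝ} (h : ∀ t ∈ Icc (0 : ℝ) 1, |g₁ t - g₂ t| ≤ R) :
    edist (pathOf g₁) (pathOf g₂) ≤ ENNReal.ofReal R :=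
  UniformFun.edist_le.2 fun t => by
    rw [edist_dist]
    exact ENNReal.ofReal_le_ofReal (h t t.2)

section MapLe

variable {X Ω : Type*} [MeasurableSpace X] [MeasurableSpace Ω] {m : Measure X} {P : Measure Ω}
  {C : NNReal} {Y : Ω → X} {g : X → ℝ}

theorem integrable_comp_of_map_le (hY : AEMeasurable Y P) (hC : P.map Y ≤ C • m)
    (hg : Integrable g m) : Integrable (fun ω => g (Y ω)) P :=
  (hg.smul_measure_nnreal.mono_measure hC).comp_aemeasurable hY

theorem integral_comp_le_of_map_le (hY : AEMeasurable Y P) (hC : P.map Y ≤ C • m)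
    (hg : Integrable g m) (h0 : 0 ≤ g) : ∫ ω, g (Y ω) ∂P ≤ C * ∫ x, g x ∂m := by
  have h_int : Integrable g (C • m) := hg.smul_measure_nnreal
  calc ∫ ω, g (Y ω) ∂P = ∫ x, g x ∂(P.map Y) :=
        (integral_map hY (h_int.mono_measure hC).aestronglyMeasurable).symm
    _ ≤ ∫ x, g x ∂(C • m) := integral_mono_measure hC (Eventually.of_forall h0) h_int
    _ = C * ∫ x, g x ∂m := integral_smul_nnreal_measure g C

end MapLe

theorem measurable_of_forall_tendsto_blockMean {X : Type*} [TopologicalSpace X]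
    [MeasurableSpace X] [OpensMeasurableSpace X] {m : Measure X} [IsProbabilityMeasure m]
    {Γ : ℝ → X → X} (hΓ : Continuous (Function.uncurry Γ)) {f : X → ℝ} (hf : Continuous f)
    {B : ℝ} (hB : ∀ x, |f x| ≤ B) {c : ℝ → ℝ}
    (hc : ∀ t, Tendsto (blockMean m (Γ t) f) atTop (𝓝 (c t))) : Measurable c :=
  measurable_of_tendsto_metrizable (fun N => (continuous_blockMean hΓ hf hB N).measurable)
    (tendsto_pi_nhds.2 hc)

theorem intervalIntegrable_of_abs_le {c : ℝ → ℝ} (hc : Measurable c) {B : ℝ}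
    (hB : ∀ t, |c t| ≤ B) (a b : ℝ) : IntervalIntegrable c volume a b :=
  (intervalIntegrable_const (c := B)).mono_fun hc.aestronglyMeasurable
    (Eventually.of_forall fun t => (hB t).trans (le_abs_self B))

theorem abs_intervalIntegral_sub_le {b c : ℝ → ℝ} (hb : IntervalIntegrable b volume 0 1)
    (hc : IntervalIntegrable c volume 0 1) {t : ℝ} (ht : t ∈ Icc (0 : ℝ) 1) :
    |(∫ s in (0 : ℝ)..t, b s) - ∫ s in (0 : ℝ)..t, c s| ≤ ∫ s in (0 : ℝ)..1, |b s - c s| := by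
  have h_sub : uIcc 0 t ⊆ uIcc (0 : ℝ) 1 := by
    rw [uIcc_of_le ht.1, uIcc_of_le zero_le_one]
    exact Icc_subset_Icc_right ht.2
  rw [← intervalIntegral.integral_sub (hb.mono_set h_sub) (hc.mono_set h_sub)]
  exact (intervalIntegral.abs_integral_le_integral_abs ht.1).trans
    (intervalIntegral.integral_mono_interval le_rfl ht.1 ht.2
      (Eventually.of_forall fun _ => abs_nonneg _) (hb.sub hc).abs)

theorem lintegral_ofReal_const_add {Ω : Type*} [MeasurableSpace Ω] {P : Measure Ω}
    [IsProbabilityMeasure P] {a : ℝ} (ha : 0 ≤ a) {g : Ω → ℝ} (hg : Integrable g P)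
    (h0 : ∀ ω, 0 ≤ g ω) : ∫⁻ ω, ENNReal.ofReal (a + g ω) ∂P = ENNReal.ofReal (a + ∫ ω, g ω ∂P) := by
  have h := ofReal_integral_eq_lintegral_ofReal (f := fun ω => a + g ω)
    ((integrable_const a).add hg) (Eventually.of_forall fun ω => add_nonneg ha (h0 ω))
  rw [← h, integral_add (integrable_const a) hg]
  simp

section Averaging

variable {X : Type*} [MeasurableSpace X] {m : Measure X} {Γ : ℝ → X → X} {f : X → ℝ} {B : ℝ}
  {N : ℕ}

/-- The time average, over the first `n` steps of the orbit `x`, of the distance between the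
`N`-th Birkhoff average under `Γ (k/n)` started at `x k` and the corresponding space average. -/
noncomputable def orbitDeviation (m : Measure X) (Γ : ℝ → X → X) (f : X → ℝ) (N n : ℕ)
    (x : ℕ → X) : ℝ :=
  (n : ℝ)⁻¹ * ∑ k ∈ Finset.range n,
    |birkhoffAverage ℝ (Γ (k / n)) f N (x k) - blockMean m (Γ (k / n)) f N|

theorem orbitDeviation_nonneg (n : ℕ) (x : ℕ → X) : 0 ≤ orbitDeviation m Γ f N n x :=
  mul_nonneg (by positivity) (Finset.sum_nonneg fun _ _ => abs_nonneg _)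

section Expectation

variable [IsProbabilityMeasure m] {Ω : Type*} [MeasurableSpace Ω] {P : Measure Ω} {C : NNReal}
  {Y : ℕ → Ω → X}

theorem integrable_orbitDeviation (hΓ : ∀ t, Measurable (Γ t)) (hf : Measurable f)
    (hB : ∀ x, |f x| ≤ B) (hY : ∀ k, AEMeasurable (Y k) P) (hC : ∀ k, P.map (Y k) ≤ C • m)
    (n : ℕ) : Integrable (fun ω => orbitDeviation m Γ f N n fun k => Y k ω) P :=
  (integrable_finsetSum _ fun k _ => integrable_comp_of_map_le (hY k) (hC k)
    ((integrable_birkhoffAverage (hΓ _) hf hB N).sub (integrable_const _)).abs).const_mul _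

theorem integral_orbitDeviation_le (hΓ : ∀ t, Measurable (Γ t)) (hf : Measurable f)
    (hB : ∀ x, |f x| ≤ B) (hY : ∀ k, AEMeasurable (Y k) P) (hC : ∀ k, P.map (Y k) ≤ C • m)
    (n : ℕ) :
    ∫ ω, orbitDeviation m Γ f N n (fun k => Y k ω) ∂P ≤
      C * ((n : ℝ)⁻¹ * ∑ k ∈ Finset.range n, blockDeviation m (Γ (k / n)) f N) := by
  have h_int (t : ℝ) :
      Integrable (fun x => |birkhoffAverage ℝ (Γ t) f N x - blockMean m (Γ t) f N|) m :=
    ((integrable_birkhoffAverage (hΓ t) hf hB N).sub (integrable_const _)).abs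
  simp only [orbitDeviation]
  rw [integral_const_mul, integral_finsetSum _ fun k _ =>
    integrable_comp_of_map_le (hY k) (hC k) (h_int _), mul_left_comm (C : ℝ),
    Finset.mul_sum _ _ (C : ℝ)]
  gcongr with k
  exact integral_comp_le_of_map_le (hY k) (hC k) (h_int _) fun _ => abs_nonneg _

end Expectation

variable [PseudoMetricSpace X] [BorelSpace X] [IsProbabilityMeasure m] {Ω : Type*}
  {orb : ℕ → ℕ → Ω → X} {c : ℝ → ℝ}

theorem IsQuasistaticOrbit.eventually_edist_pathOf_le (h : IsQuasistaticOrbit Γ orb)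
    (hΓ : UniformContinuous (Function.uncurry Γ)) (hf : UniformContinuous f)
    (hB : ∀ x, |f x| ≤ B) (hN : 0 < N) (hc : IntervalIntegrable c volume 0 1) {ε : ℝ}
    (hε : 0 < ε) :
    ∀ᶠ n : ℕ in atTop, ∀ ω,
      edist (pathOf (polygonalPath n fun k => f (orb n k ω)))
        (pathOf fun t => ∫ s in (0 : ℝ)..t, c s) ≤
      ENNReal.ofReal ((∫ s in (0 : ℝ)..1, |blockMean m (Γ s) f N - c s|) + ε +
        orbitDeviation m Γ f N n fun k => orb n k ω) := by
  have h_cont := continuous_blockMean (m := m) hΓ.continuous hf.continuous hB N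
  have h_last : ∀ᶠ n : ℕ in atTop, (B + 2 * B * N) / (n : ℝ) < ε / 3 :=
    (tendsto_const_div_atTop_nhds_zero_nat _).eventually_lt_const (by positivity)
  filter_upwards [h_last, h.eventually_abs_blockAverage_sub_le hΓ hf N (ε := ε / 3) (by positivity),
    Metric.tendstoUniformlyOn_iff.1 (tendstoUniformlyOn_riemannSum h_cont.continuousOn) (ε / 3)
      (by positivity)] with n h_last h_block h_riemann ω
  refine edist_pathOf_le fun t ht => ?_
  have h_path := abs_polygonalPath_sub_sum_le (n := n)
    (b := fun k => blockMean m (Γ (k / n)) f N) hN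
    (fun k => hB (orb n k ω)) (fun k => h_block k ω) ht.2
  have h_limit := abs_intervalIntegral_sub_le (h_cont.intervalIntegrable 0 1) hc ht
  have h_sum := h_riemann t ht
  rw [dist_comm, Real.dist_eq] at h_sum
  refine (abs_sub_le _ _ _).trans ((add_le_add h_path ((abs_sub_le _ _ _).trans
    (add_le_add h_sum.le h_limit))).trans ?_)
  rw [orbitDeviation]
  linarith

variable [MeasurableSpace Ω] {P : Measure Ω} {C : NNReal}

theorem eventually_integral_orbitDeviation_le (hΓ : Continuous (Function.uncurry Γ))
    (hf : Continuous f) (hB : ∀ x, |f x| ≤ B) (horb : ∀ n k, AEMeasurable (orb n k) P)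
    (hC : ∀ n k, P.map (orb n k) ≤ C • m) {ε : ℝ} (hε : 0 < ε) :
    ∀ᶠ n : ℕ in atTop, ∫ ω, orbitDeviation m Γ f N n (fun k => orb n k ω) ∂P ≤
      C * (∫ s in (0 : ℝ)..1, blockDeviation m (Γ s) f N) + ε := by
  have h_riemann := ((tendstoUniformlyOn_riemannSum (continuous_blockDeviation (m := m) hΓ hf hB
    N).continuousOn).tendsto_at (right_mem_Icc.2 zero_le_one)).const_mul (C : ℝ)
  simp only [mul_one, Nat.floor_natCast, smul_eq_mul] at h_riemann
  filter_upwards [h_riemann.eventually_lt_const (lt_add_of_pos_right _ hε)] with n hn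
  exact (integral_orbitDeviation_le (fun t => (hΓ.uncurry_left t).measurable)
    hf.measurable hB (horb n) (hC n) n).trans hn.le

theorem IsQuasistaticOrbit.eventually_lintegral_edist_pathOf_le [IsProbabilityMeasure P]
    (h : IsQuasistaticOrbit Γ orb) (hΓ : UniformContinuous (Function.uncurry Γ))
    (hf : UniformContinuous f) (hB : ∀ x, |f x| ≤ B) (hN : 0 < N)
    (hc : IntervalIntegrable c volume 0 1) (horb : ∀ n k, AEMeasurable (orb n k) P)
    (hC : ∀ n k, P.map (orb n k) ≤ C • m) {ε : ℝ} (hε : 0 < ε) :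
    ∀ᶠ n : ℕ in atTop,
      ∫⁻ ω, edist (pathOf (polygonalPath n fun k => f (orb n k ω)))
        (pathOf fun t => ∫ s in (0 : ℝ)..t, c s) ∂P ≤
      ENNReal.ofReal ((∫ s in (0 : ℝ)..1, |blockMean m (Γ s) f N - c s|) +
        C * (∫ s in (0 : ℝ)..1, blockDeviation m (Γ s) f N) + ε) := by
  filter_upwards [h.eventually_edist_pathOf_le (m := m) hΓ hf hB hN hc (half_pos hε),
    eventually_integral_orbitDeviation_le (N := N) hΓ.continuous hf.continuous hB horb hC
      (half_pos hε)] with n h_path h_dev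
  have h_int := integrable_orbitDeviation (N := N)
    (fun t => (hΓ.continuous.uncurry_left t).measurable) hf.continuous.measurable hB
    (horb n) (hC n) n
  have h_mean_nonneg : 0 ≤ ∫ s in (0 : ℝ)..1, |blockMean m (Γ s) f N - c s| :=
    intervalIntegral.integral_nonneg zero_le_one fun _ _ => abs_nonneg _
  refine (lintegral_mono h_path).trans ?_
  rw [lintegral_ofReal_const_add (by positivity) h_int fun _ => orbitDeviation_nonneg n _]
  exact ENNReal.ofReal_le_ofReal (by linarith)

theorem tendsto_intervalIntegral_blockDeviation (hΓ : Continuous (Function.uncurry Γ))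
    (hf : Continuous f) (hB : ∀ x, |f x| ≤ B)
    (hc : ∀ t, Tendsto (fun N => ∫ x, |birkhoffAverage ℝ (Γ t) f N x - c t| ∂m) atTop (𝓝 0)) :
    Tendsto (fun N => ∫ s in (0 : ℝ)..1, blockDeviation m (Γ s) f N) atTop (𝓝 0) := by
  have h := intervalIntegral.tendsto_integral_filter_of_dominated_convergence (μ := volume)
    (a := 0) (b := 1) (l := atTop) (F := fun N s => blockDeviation m (Γ s) f N) (f := fun _ => 0)
    (fun _ => 2 * B)
    (Eventually.of_forall fun N => (continuous_blockDeviation hΓ hf hB N).aestronglyMeasurable)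
    (Eventually.of_forall fun N => Eventually.of_forall fun s _ => abs_blockDeviation_le hB (Γ s) N)
    intervalIntegrable_const (Eventually.of_forall fun s _ => tendsto_blockDeviation
      (hΓ.uncurry_left s).measurable hf.measurable hB (hc s))
  simpa using h

theorem tendsto_intervalIntegral_abs_blockMean_sub (hΓ : Continuous (Function.uncurry Γ))
    (hf : Continuous f) (hB : ∀ x, |f x| ≤ B)
    (hc : ∀ t, Tendsto (blockMean m (Γ t) f) atTop (𝓝 (c t))) :
    Tendsto (fun N => ∫ s in (0 : ℝ)..1, |blockMean m (Γ s) f N - c s|) atTop (𝓝 0) := by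
  have hc_meas := measurable_of_forall_tendsto_blockMean hΓ hf hB hc
  have h_bound (t : ℝ) : |c t| ≤ B :=
    le_of_tendsto (hc t).abs (Eventually.of_forall (abs_blockMean_le hB (Γ t)))
  have h := intervalIntegral.tendsto_integral_filter_of_dominated_convergence (μ := volume)
    (a := 0) (b := 1) (l := atTop) (F := fun N s => |blockMean m (Γ s) f N - c s|)
    (f := fun _ => 0) (fun _ => B + B)
    (Eventually.of_forall fun N => ((continuous_blockMean hΓ hf hB N).measurable.sub
      hc_meas).abs.aestronglyMeasurable)
    (Eventually.of_forall fun N => Eventually.of_forall fun s _ => (abs_abs _).trans_le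
      ((abs_sub _ _).trans (add_le_add (abs_blockMean_le hB (Γ s) N) (h_bound s))))
    intervalIntegrable_const
    (Eventually.of_forall fun s _ => by simpa using ((hc s).sub_const (c s)).abs)
  simpa using h

theorem IsQuasistaticOrbit.tendsto_lintegral_edist_pathOf [IsProbabilityMeasure P]
    (h : IsQuasistaticOrbit Γ orb) (hΓ : UniformContinuous (Function.uncurry Γ))
    (hf : UniformContinuous f) (hB : ∀ x, |f x| ≤ B) (horb : ∀ n k, AEMeasurable (orb n k) P)
    (hC : ∀ n k, P.map (orb n k) ≤ C • m)
    (hc : ∀ t, Tendsto (fun N => ∫ x, |birkhoffAverage ℝ (Γ t) f N x - c t| ∂m) atTop (𝓝 0)) :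
    Tendsto (fun n => ∫⁻ ω, edist (pathOf (polygonalPath n fun k => f (orb n k ω)))
      (pathOf fun t => ∫ s in (0 : ℝ)..t, c s) ∂P) atTop (𝓝 0) := by
  have h_mean (t : ℝ) : Tendsto (blockMean m (Γ t) f) atTop (𝓝 (c t)) :=
    tendsto_blockMean (hΓ.continuous.uncurry_left t).measurable hf.continuous.measurable
      hB (hc t)
  have hc_int : IntervalIntegrable c volume 0 1 := intervalIntegrable_of_abs_le
    (measurable_of_forall_tendsto_blockMean hΓ.continuous hf.continuous hB h_mean)
    (fun t => le_of_tendsto (h_mean t).abs (Eventually.of_forall (abs_blockMean_le hB (Γ t)))) 0 1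
  have h_error : Tendsto (fun N : ℕ => ENNReal.ofReal
      ((∫ s in (0 : ℝ)..1, |blockMean m (Γ s) f N - c s|) +
        C * (∫ s in (0 : ℝ)..1, blockDeviation m (Γ s) f N) + 1 / ((N : ℝ) + 1)))
      atTop (𝓝 0) := by
    simpa using ENNReal.tendsto_ofReal
      (((tendsto_intervalIntegral_abs_blockMean_sub hΓ.continuous hf.continuous hB h_mean).add
        ((tendsto_intervalIntegral_blockDeviation hΓ.continuous hf.continuous hB hc).const_mul
          (C : ℝ))).add tendsto_one_div_add_atTop_nhds_zero_nat)
  refine ENNReal.tendsto_nhds_zero.2 fun δ hδ => ?_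
  obtain ⟨N, h_small, hN⟩ :=
    ((ENNReal.tendsto_nhds_zero.1 h_error δ hδ).and (eventually_gt_atTop 0)).exists
  filter_upwards [h.eventually_lintegral_edist_pathOf_le hΓ hf hB hN hc_int horb hC
    Nat.one_div_pos_of_nat] with n hn
  exact hn.trans h_small

end Averaging

/-! ### Lifts of circle maps with bounded distortion -/

/-- `G : ℝ → ℝ` is a lift of an orientation preserving circle map with `G' ≥ c > 0` whose
distortion is bounded by `κ`. The distance in the distortion bound is measured between the
*images* of the two points, so that `κ` can stay bounded along compositions. -/
structure IsBoundedDistortionLift (κ c : ℝ) (G : ℝ → ℝ) : Prop where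
  nonneg : 0 ≤ κ
  pos : 0 < c
  differentiable : Differentiable ℝ G
  le_deriv : ∀ x, c ≤ deriv G x
  deriv_le : ∀ x y, deriv G x ≤ Real.exp (κ * |G x - G y|) * deriv G y
  exists_add_one : ∃ d : ℤ, ∀ x, G (x + 1) = G x + d

theorem map_add_intCast_of_map_add_one {G : ℝ → ℝ} {d : ℝ} (h : ∀ x, G (x + 1) = G x + d)
    (x : ℝ) (n : ℤ) : G (x + n) = G x + n * d := by
  simpa using AddConstMapClass.map_add_int' (⟨G, h⟩ : AddConstMap ℝ ℝ 1 d) x n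

theorem mul_abs_sub_le_of_le_deriv {G : ℝ → ℝ} {c : ℝ} (hG : Differentiable ℝ G)
    (hc : ∀ x, c ≤ deriv G x) (x y : ℝ) : c * |x - y| ≤ |G x - G y| := by
  wlog hxy : y ≤ x generalizing x y
  · simpa only [abs_sub_comm] using this y x (le_of_not_ge hxy)
  rw [abs_of_nonneg (sub_nonneg.2 hxy)]
  exact (mul_sub_le_image_sub_of_le_deriv hG hc hxy).trans (le_abs_self _)

namespace IsBoundedDistortionLift

variable {κ κ₁ κ₂ c c₁ c₂ p q : ℝ} {F G : ℝ → ℝ}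

theorem id (hκ : 0 ≤ κ) : IsBoundedDistortionLift κ 1 (id : ℝ → ℝ) where
  nonneg := hκ
  pos := one_pos
  differentiable := differentiable_id
  le_deriv x := by simp
  deriv_le x y := by simpa using mul_nonneg hκ (abs_nonneg (x - y))
  exists_add_one := ⟨1, fun x => by simp⟩

theorem deriv_pos (h : IsBoundedDistortionLift κ c G) (x : ℝ) : 0 < deriv G x :=
  h.pos.trans_le (h.le_deriv x)

theorem strictMono (h : IsBoundedDistortionLift κ c G) : StrictMono G :=
  strictMono_of_deriv_pos h.deriv_pos

theorem continuous (h : IsBoundedDistortionLift κ c G) : Continuous G :=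
  h.differentiable.continuous

/-- The distortion of the inner map, measured in the image of the outer one, gains the
factor `c₁⁻¹`. -/
theorem comp (hF : IsBoundedDistortionLift κ₁ c₁ F) (hG : IsBoundedDistortionLift κ₂ c₂ G) :
    IsBoundedDistortionLift (κ₁ + κ₂ / c₁) (c₁ * c₂) (F ∘ G) := by
  have h_deriv (x : ℝ) : deriv (F ∘ G) x = deriv F (G x) * deriv G x :=
    deriv_comp x (hF.differentiable _) (hG.differentiable x)
  refine ⟨add_nonneg hF.nonneg (div_nonneg hG.nonneg hF.pos.le), mul_pos hF.pos hG.pos,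
    hF.differentiable.comp hG.differentiable, fun x => ?_, fun x y => ?_, ?_⟩
  · rw [h_deriv]
    exact mul_le_mul (hF.le_deriv _) (hG.le_deriv x) hG.pos.le (hF.deriv_pos _).le
  · have h_contract : κ₂ * |G x - G y| ≤ κ₂ / c₁ * |F (G x) - F (G y)| := by
      rw [div_mul_eq_mul_div, le_div_iff₀' hF.pos, mul_left_comm]
      exact mul_le_mul_of_nonneg_left
        (mul_abs_sub_le_of_le_deriv hF.differentiable hF.le_deriv _ _) hG.nonneg
    rw [h_deriv, h_deriv]
    calc deriv F (G x) * deriv G x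
        ≤ (Real.exp (κ₁ * |F (G x) - F (G y)|) * deriv F (G y)) *
            (Real.exp (κ₂ * |G x - G y|) * deriv G y) :=
          mul_le_mul (hF.deriv_le _ _) (hG.deriv_le x y) (hG.deriv_pos x).le
            (mul_nonneg (Real.exp_pos _).le (hF.deriv_pos _).le)
      _ = Real.exp (κ₁ * |F (G x) - F (G y)| + κ₂ * |G x - G y|) *
            (deriv F (G y) * deriv G y) := by rw [Real.exp_add]; ring
      _ ≤ Real.exp ((κ₁ + κ₂ / c₁) * |F (G x) - F (G y)|) * (deriv F (G y) * deriv G y) := by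
          have h_deriv_nonneg := (mul_pos (hF.deriv_pos (G y)) (hG.deriv_pos y)).le
          rw [add_mul]
          gcongr
  · obtain ⟨d, hd⟩ := hF.exists_add_one
    obtain ⟨e, he⟩ := hG.exists_add_one
    refine ⟨e * d, fun x => ?_⟩
    rw [Function.comp_apply, he, map_add_intCast_of_map_add_one hd, Int.cast_mul,
      Function.comp_apply]

theorem of_contDiff {A : ℝ} (hc : 0 < c) (hF : ContDiff ℝ 2 F) (h_expand : ∀ x, c ≤ deriv F x)
    (h_bound : ∀ x, |deriv (deriv F) x| ≤ A) (h_one : ∃ d : ℤ, ∀ x, F (x + 1) = F x + d) :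
    IsBoundedDistortionLift (A / c ^ 2) c F := by
  have hA : 0 ≤ A := (abs_nonneg _).trans (h_bound 0)
  have h_diff : Differentiable ℝ F := hF.differentiable two_ne_zero
  have h_diff' : Differentiable ℝ (deriv F) := (hF.deriv' (n := 1)).differentiable one_ne_zero
  refine ⟨by positivity, hc, h_diff, h_expand, fun x y => ?_, h_one⟩
  have h_lip : |deriv F x - deriv F y| ≤ A * |x - y| := by
    simpa using convex_univ.norm_image_sub_le_of_norm_deriv_le (fun z _ => h_diff' z)
      (fun z _ => h_bound z) (mem_univ y) (mem_univ x)
  have h_contract := mul_abs_sub_le_of_le_deriv h_diff h_expand x y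
  have h_rel : A * |x - y| ≤ A / c ^ 2 * |F x - F y| * deriv F y :=
    calc A * |x - y| = A / c ^ 2 * (c * |x - y|) * c := by field_simp
      _ ≤ A / c ^ 2 * |F x - F y| * deriv F y := by gcongr; exact h_expand y
  have h_exp := mul_le_mul_of_nonneg_right (Real.add_one_le_exp (A / c ^ 2 * |F x - F y|))
    (hc.le.trans (h_expand y))
  linarith [le_abs_self (deriv F x - deriv F y)]

theorem exists_natCast_add_one (h : IsBoundedDistortionLift κ c G) :
    ∃ d : ℕ, 1 ≤ d ∧ ∀ x, G (x + 1) = G x + d := by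
  obtain ⟨d, hd⟩ := h.exists_add_one
  have h_pos : 0 < d := by
    have h_lt := h.strictMono (lt_add_one (0 : ℝ))
    rw [hd] at h_lt
    exact_mod_cast lt_add_iff_pos_right _ |>.1 h_lt
  lift d to ℕ using h_pos.le
  exact ⟨d, by exact_mod_cast h_pos, by exact_mod_cast hd⟩

theorem exists_eq_add_one (h : IsBoundedDistortionLift κ c G) (x : ℝ) :
    ∃ q, G q = G x + 1 := by
  obtain ⟨d, hd, hG⟩ := h.exists_natCast_add_one
  have h_mem : G x + 1 ∈ Icc (G x) (G (x + 1)) := by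
    rw [hG]
    exact ⟨by linarith, by gcongr; exact_mod_cast hd⟩
  obtain ⟨q, -, hq⟩ := intermediate_value_Icc (by linarith) h.continuous.continuousOn h_mem
  exact ⟨q, hq⟩

theorem lt_of_eq_add_one (h : IsBoundedDistortionLift κ c G) (hpq : G q = G p + 1) : p < q :=
  h.strictMono.lt_iff_lt.1 (by linarith)

theorem mul_sub_le_one (h : IsBoundedDistortionLift κ c G) (hpq : G q = G p + 1) :
    c * (q - p) ≤ 1 := by
  have h_le := mul_sub_le_image_sub_of_le_deriv h.differentiable h.le_deriv
    (h.lt_of_eq_add_one hpq).le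
  linarith

/-- On a full branch `(p, q]`, the derivative is comparable to its mean value `1 / (q - p)`. -/
theorem sub_mul_deriv_mem_Icc (h : IsBoundedDistortionLift κ c G) (hpq : G q = G p + 1)
    {x : ℝ} (hx : x ∈ Ioc p q) :
    (q - p) * deriv G x ∈ Icc (Real.exp (-κ)) (Real.exp κ) := by
  have hlt := h.lt_of_eq_add_one hpq
  obtain ⟨ξ, hξ, h_slope⟩ := exists_deriv_eq_slope G hlt h.continuous.continuousOn
    h.differentiable.differentiableOn
  have h_mean : (q - p) * deriv G ξ = 1 := by
    rw [h_slope, mul_div_cancel₀ _ (sub_pos.2 hlt).ne', hpq, add_sub_cancel_left]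
  have h_dist : |G x - G ξ| ≤ 1 := by
    rw [abs_le]
    constructor <;> linarith [h.strictMono.monotone hx.1.le, h.strictMono.monotone hx.2,
      h.strictMono.monotone hξ.1.le, h.strictMono.monotone hξ.2.le]
  have h_compare {u v : ℝ} (huv : |G u - G v| ≤ 1) :
      (q - p) * deriv G u ≤ Real.exp κ * ((q - p) * deriv G v) := by
    rw [mul_left_comm]
    refine mul_le_mul_of_nonneg_left ((h.deriv_le u v).trans ?_) (sub_pos.2 hlt).le
    refine mul_le_mul_of_nonneg_right (Real.exp_le_exp.2 ?_) (h.deriv_pos v).le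
    exact mul_le_of_le_one_right h.nonneg huv
  constructor
  · rw [Real.exp_neg, inv_le_iff_one_le_mul₀' (Real.exp_pos κ), ← h_mean]
    exact h_compare (by rwa [abs_sub_comm])
  · simpa only [h_mean, mul_one] using h_compare h_dist

theorem setLIntegral_abs_deriv_mul_comp (h : IsBoundedDistortionLift κ c G)
    (hpq : G q = G p + 1) (φ : Circle1 → ENNReal) :
    ∫⁻ x in Ioc p q, ENNReal.ofReal |deriv G x| * φ (G x : Circle1) = ∫⁻ y, φ y := by
  rw [← lintegral_image_eq_lintegral_abs_deriv_mul measurableSet_Ioc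
      (fun x _ => (h.differentiable x).hasDerivAt.hasDerivWithinAt) h.strictMono.injective.injOn
      fun y => φ (y : Circle1),
    h.continuous.image_Ioc_of_strictMono h.strictMono,
    hpq, AddCircle.lintegral_preimage 1 (G p) φ]

theorem setLIntegral_comp_le (h : IsBoundedDistortionLift κ c G) (hpq : G q = G p + 1)
    (φ : Circle1 → ENNReal) :
    ∫⁻ x in Ioc p q, φ (G x : Circle1) ≤
      ENNReal.ofReal (Real.exp κ * (q - p)) * ∫⁻ y, φ y := by
  rw [← h.setLIntegral_abs_deriv_mul_comp hpq, ← lintegral_const_mul' _ _ ENNReal.ofReal_ne_top]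
  refine setLIntegral_mono' measurableSet_Ioc fun x hx => ?_
  have h_sub := sub_pos.2 (h.lt_of_eq_add_one hpq)
  rw [← mul_assoc, ← ENNReal.ofReal_mul (by positivity), abs_of_pos (h.deriv_pos x), mul_assoc]
  refine le_mul_of_one_le_left zero_le (ENNReal.one_le_ofReal.2 ?_)
  rw [← inv_le_iff_one_le_mul₀' (Real.exp_pos κ), ← Real.exp_neg]
  exact (h.sub_mul_deriv_mem_Icc hpq hx).1

theorem le_setLIntegral_comp (h : IsBoundedDistortionLift κ c G) (hpq : G q = G p + 1)
    (φ : Circle1 → ENNReal) :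
    ENNReal.ofReal (Real.exp (-κ) * (q - p)) * ∫⁻ y, φ y ≤
      ∫⁻ x in Ioc p q, φ (G x : Circle1) := by
  rw [← h.setLIntegral_abs_deriv_mul_comp hpq, ← lintegral_const_mul' _ _ ENNReal.ofReal_ne_top]
  refine setLIntegral_mono' measurableSet_Ioc fun x hx => ?_
  have h_sub := sub_pos.2 (h.lt_of_eq_add_one hpq)
  rw [← mul_assoc, ← ENNReal.ofReal_mul (by positivity), abs_of_pos (h.deriv_pos x), mul_assoc]
  refine mul_le_of_le_one_left zero_le (ENNReal.ofReal_le_one.2 ?_)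
  rw [Real.exp_neg, inv_mul_le_iff₀ (Real.exp_pos κ), mul_one]
  exact (h.sub_mul_deriv_mem_Icc hpq hx).2

theorem setLIntegral_comp_le_of_natCast (h : IsBoundedDistortionLift κ c G) (d : ℕ)
    (hpq : G q = G p + d) (φ : Circle1 → ENNReal) :
    ∫⁻ x in Ioc p q, φ (G x : Circle1) ≤
      ENNReal.ofReal (Real.exp κ * (q - p)) * ∫⁻ y, φ y := by
  induction d generalizing q with
  | zero => simp [h.strictMono.injective (by simpa using hpq : G q = G p)]
  | succ d ih =>
    have hle : p ≤ q :=
      h.strictMono.le_iff_le.1 (by rw [hpq]; linarith [(d + 1).cast_nonneg (α := ℝ)])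
    obtain ⟨r, hr, hGr⟩ := intermediate_value_Icc hle h.continuous.continuousOn
      (show G p + d ∈ Icc (G p) (G q) from ⟨by simp, by rw [hpq]; simp⟩)
    have h_branch : G q = G r + 1 := by rw [hpq, hGr]; push_cast; ring
    have h_pr : 0 ≤ Real.exp κ * (r - p) := mul_nonneg (Real.exp_pos _).le (sub_nonneg.2 hr.1)
    have h_rq : 0 ≤ Real.exp κ * (q - r) := mul_nonneg (Real.exp_pos _).le (sub_nonneg.2 hr.2)
    rw [← Ioc_union_Ioc_eq_Ioc hr.1 hr.2]
    refine (lintegral_union_le _ _ _).trans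
      ((add_le_add (ih hGr) (h.setLIntegral_comp_le h_branch φ)).trans_eq ?_)
    rw [← add_mul, ← ENNReal.ofReal_add h_pr h_rq, ← mul_add]
    ring_nf

theorem map_volume_le (h : IsBoundedDistortionLift κ c G) {S : Circle1 → Circle1}
    (hS : Measurable S) (hSG : ∀ x : ℝ, S x = (G x : Circle1)) :
    (volume : Measure Circle1).map S ≤ (Real.exp κ).toNNReal • volume := by
  refine Measure.le_iff.2 fun s hs => ?_
  obtain ⟨d, -, hd⟩ := h.exists_natCast_add_one
  have h_le := h.setLIntegral_comp_le_of_natCast d (hd 0) (s.indicator 1)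
  simp only [← hSG] at h_le
  calc volume.map S s = ∫⁻ y, (S ⁻¹' s).indicator 1 y := by
        rw [Measure.map_apply hS hs, lintegral_indicator_one (hS hs)]
    _ = ∫⁻ x in Ioc (0 : ℝ) (0 + 1), s.indicator 1 (S x) :=
        (AddCircle.lintegral_preimage 1 0 _).symm
    _ ≤ ((Real.exp κ).toNNReal • volume) s := by
        rwa [add_sub_cancel_left, mul_one, lintegral_indicator_one hs] at h_le

end IsBoundedDistortionLift

/-! ### Ergodicity and invariant densities of expanding circle maps -/

theorem volume_inter_Icc_div_add_le_one {S : Set ℝ} (hS : MeasurableSet S) {c : ENNReal}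
    {x q : ℝ} (hxq : x < q) (h : ENNReal.ofReal (q - x) * c ≤ volume (S ∩ Icc x q)) :
    volume (Sᶜ ∩ Icc x q) / volume (Icc x q) + c ≤ 1 := by
  have h_pos : volume (Icc x q) ≠ 0 := by simpa using hxq
  have h_top : volume (Icc x q) ≠ ⊤ := measure_Icc_lt_top.ne
  have hc : c ≤ volume (S ∩ Icc x q) / volume (Icc x q) := by
    rwa [ENNReal.le_div_iff_mul_le (Or.inl h_pos) (Or.inl h_top), mul_comm, Real.volume_Icc]
  calc volume (Sᶜ ∩ Icc x q) / volume (Icc x q) + c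
      ≤ volume (Sᶜ ∩ Icc x q) / volume (Icc x q) + volume (S ∩ Icc x q) / volume (Icc x q) := by
        gcongr
    _ = volume (Icc x q) / volume (Icc x q) := by
        rw [← ENNReal.add_div, inter_comm Sᶜ, inter_comm S, add_comm, ← sdiff_eq,
          measure_inter_add_sdiff _ hS]
    _ = 1 := ENNReal.div_self h_pos h_top

/-- A Lebesgue density point of `Sᶜ` cannot have one-sided neighbourhoods of which `S` fills a
fixed proportion. -/
theorem volume_compl_eq_zero_of_forall_exists_Icc {S : Set ℝ} (hS : MeasurableSet S)
    {c : ENNReal} (hc : c ≠ 0)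
    (h : ∀ x, ∃ q : ℕ → ℝ, (∀ k, x < q k) ∧ Tendsto q atTop (𝓝 x) ∧
      ∀ k, ENNReal.ofReal (q k - x) * c ≤ volume (S ∩ Icc x (q k))) :
    volume Sᶜ = 0 := by
  by_contra h_pos
  have : (ae (volume.restrict Sᶜ)).NeBot := ae_neBot.2 (mt Measure.restrict_eq_zero.1 h_pos)
  obtain ⟨x, hx⟩ :=
    (IsUnifLocDoublingMeasure.ae_tendsto_measure_inter_div (volume : Measure ℝ) Sᶜ 1).exists
  obtain ⟨q, hxq, hq, h_le⟩ := h x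
  have h_ball (k : ℕ) : Metric.closedBall ((x + q k) / 2) ((q k - x) / 2) = Icc x (q k) := by
    rw [Real.closedBall_eq_Icc]
    congr 1 <;> ring
  have h_radius : Tendsto (fun k => (q k - x) / 2) atTop (𝓝[>] 0) := by
    refine tendsto_nhdsWithin_iff.2
      ⟨?_, Eventually.of_forall fun k => half_pos (sub_pos.2 (hxq k))⟩
    simpa using (hq.sub_const x).div_const 2
  have h_lim := hx (fun k => (x + q k) / 2) (fun k => (q k - x) / 2) h_radius
    (Eventually.of_forall fun k => by rw [one_mul, h_ball]; exact left_mem_Icc.2 (hxq k).le)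
  simp only [h_ball] at h_lim
  have h_one_add : 1 + c ≤ 1 + 0 := by
    simpa using le_of_tendsto' (h_lim.add_const c)
      fun k => volume_inter_Icc_div_add_le_one hS (hxq k) (h_le k)
  exact hc (nonpos_iff_eq_zero.1 ((ENNReal.add_le_add_iff_left ENNReal.one_ne_top).1 h_one_add))

theorem IsBoundedDistortionLift.mul_volume_le_volume_inter_Icc {κ c p q : ℝ} {G : ℝ → ℝ}
    (h : IsBoundedDistortionLift κ c G) (hpq : G q = G p + 1) {s : Set Circle1}
    (hs : MeasurableSet s) (h_inv : ∀ x : ℝ, (G x : Circle1) ∈ s ↔ (x : Circle1) ∈ s) :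
    ENNReal.ofReal (q - p) * (ENNReal.ofReal (Real.exp (-κ)) * volume s) ≤
      volume (((↑) : ℝ → Circle1) ⁻¹' s ∩ Icc p q) := by
  have hS : MeasurableSet (((↑) : ℝ → Circle1) ⁻¹' s) := AddCircle.measurable_mk' hs
  have h_indicator (x : ℝ) : s.indicator (1 : Circle1 → ENNReal) (G x) =
      (((↑) : ℝ → Circle1) ⁻¹' s).indicator 1 x :=
    indicator_eq_indicator (h_inv x) rfl
  have h_le := h.le_setLIntegral_comp hpq (s.indicator 1)
  simp only [h_indicator] at h_le
  rw [lintegral_indicator_one hs, lintegral_indicator_one hS, Measure.restrict_apply hS,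
    mul_comm (Real.exp _), ENNReal.ofReal_mul (sub_pos.2 (h.lt_of_eq_add_one hpq)).le,
    mul_assoc] at h_le
  exact h_le.trans (measure_mono (inter_subset_inter_right _ Ioc_subset_Icc_self))

theorem Circle1.volume_eq_zero_of_volume_preimage_coe {s : Set Circle1} (hs : MeasurableSet s)
    (h : volume (((↑) : ℝ → Circle1) ⁻¹' s) = 0) : volume s = 0 := by
  rw [← (AddCircle.measurePreserving_mk 1 0).measure_preimage hs.nullMeasurableSet]
  exact nonpos_iff_eq_zero.1 ((Measure.restrict_apply_le _ _).trans h.le)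

/-- The branches of the iterates give arbitrarily short intervals at every point, in each of
which an invariant set fills the same proportion, up to distortion, as in the circle. -/
theorem preErgodic_of_isBoundedDistortionLift_iterate {T : Circle1 → Circle1} {κ : ℝ} {c : ℕ → ℝ}
    (hc : Tendsto c atTop atTop)
    (h : ∀ k, ∃ G, IsBoundedDistortionLift κ (c k) G ∧
      ∀ x : ℝ, T^[k] x = (G x : Circle1)) :
    PreErgodic T (volume : Measure Circle1) := by
  refine ⟨fun s hs h_inv => eventuallyConst_set'.2 (or_iff_not_imp_left.2 fun h_ne => ?_)⟩
  have hs_pos : volume s ≠ 0 := fun h0 => h_ne (ae_eq_empty.2 h0)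
  choose G hG hGT using h
  have h_inv_lift (k : ℕ) (x : ℝ) : (G k x : Circle1) ∈ s ↔ (x : Circle1) ∈ s := by
    rw [← hGT, ← mem_preimage, Function.IsFixedPt.preimage_iterate h_inv k]
  refine ae_eq_univ.2 (Circle1.volume_eq_zero_of_volume_preimage_coe hs.compl ?_)
  refine volume_compl_eq_zero_of_forall_exists_Icc (AddCircle.measurable_mk' hs)
    (c := ENNReal.ofReal (Real.exp (-κ)) * volume s)
    (mul_ne_zero (by simpa using Real.exp_pos _) hs_pos) fun x => ?_
  choose q hq using fun k => (hG k).exists_eq_add_one x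
  have hxq (k : ℕ) : x < q k := (hG k).lt_of_eq_add_one (hq k)
  refine ⟨q, hxq, ?_, fun k => (hG k).mul_volume_le_volume_inter_Icc (hq k) hs (h_inv_lift k)⟩
  have h_upper (k : ℕ) : q k ≤ x + (c k)⁻¹ := by
    have := (le_inv_mul_iff₀ (hG k).pos).2 ((hG k).mul_sub_le_one (hq k))
    linarith
  exact tendsto_of_tendsto_of_tendsto_of_le_of_le tendsto_const_nhds
    (by simpa using hc.inv_tendsto_atTop.const_add x) (fun k => (hxq k).le) h_upper

instance : IsProbabilityMeasure (volume : Measure Circle1) := ⟨by simp⟩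

namespace CM

variable {lam Astar : ℝ}

theorem isBoundedDistortionLift (hlam : 0 < lam) (T : CM lam Astar) :
    IsBoundedDistortionLift (Astar / lam ^ 2) lam T.F :=
  .of_contDiff hlam T.contDiff T.expanding T.second_bound ⟨T.deg, T.lift_add_one⟩

theorem toMap_coe (T : CM lam Astar) (x : ℝ) : T.toMap (x : Circle1) = (T.F x : Circle1) := by
  have h_shift := map_add_intCast_of_map_add_one T.lift_add_one (Int.fract x) ⌊x⌋
  rw [Int.fract_add_floor] at h_shift
  have h_int : ((⌊x⌋ * T.deg : ℝ) : Circle1) = 0 :=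
    (AddCircle.coe_eq_zero_iff 1).2 ⟨⌊x⌋ * T.deg, by simp⟩
  rw [toMap, AddCircle.coe_equivIco_mk_apply, h_shift, AddCircle.coe_add, h_int]
  simp

theorem continuous_toMap (T : CM lam Astar) : Continuous T.toMap := by
  have h_quot : IsQuotientMap ((↑) : ℝ → Circle1) := isQuotientMap_quotient_mk'
  rw [h_quot.continuous_iff, show T.toMap ∘ (↑) = fun x : ℝ => (T.F x : Circle1) from
    funext T.toMap_coe]
  exact (AddCircle.continuous_mk' 1).comp T.contDiff.continuous

theorem astar_nonneg (T : CM lam Astar) : 0 ≤ Astar :=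
  (abs_nonneg _).trans (T.second_bound 0)

end CM

section Compositions

variable {lam Astar : ℝ}

/-- The distortion constant solves `Astar / lam ^ 2 + κ / lam = κ`, so it does not grow with the
number of maps composed. -/
theorem exists_isBoundedDistortionLift_arrIter (hlam : 1 < lam) (Tarr : ℕ → ℕ → CM lam Astar)
    (n k : ℕ) :
    ∃ G, IsBoundedDistortionLift (Astar / (lam * (lam - 1))) (lam ^ k) G ∧
      ∀ x : ℝ, arrIter Tarr n k x = (G x : Circle1) := by
  have hlam' : 0 < lam - 1 := sub_pos.2 hlam
  have hA := (Tarr 0 0).astar_nonneg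
  induction k with
  | zero => exact ⟨id, by simpa using .id (by positivity), fun x => rfl⟩
  | succ k ih =>
    obtain ⟨G, hG, hGT⟩ := ih
    have h_fix : Astar / lam ^ 2 + Astar / (lam * (lam - 1)) / lam = Astar / (lam * (lam - 1)) := by
      field_simp
      ring
    have h_comp := ((Tarr n (k + 1)).isBoundedDistortionLift (by positivity)).comp hG
    rw [h_fix, ← pow_succ'] at h_comp
    exact ⟨_, h_comp, fun x => by simp only [arrIter, Function.comp_apply, hGT, CM.toMap_coe]⟩

theorem continuous_arrIter (Tarr : ℕ → ℕ → CM lam Astar) (n k : ℕ) :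
    Continuous (arrIter Tarr n k) := by
  induction k with
  | zero => exact continuous_id
  | succ k ih => exact (Tarr n (k + 1)).continuous_toMap.comp ih

theorem map_arrIter_volume_le (hlam : 1 < lam) (Tarr : ℕ → ℕ → CM lam Astar) (n k : ℕ) :
    (volume : Measure Circle1).map (arrIter Tarr n k) ≤
      (Real.exp (Astar / (lam * (lam - 1)))).toNNReal • volume := by
  obtain ⟨G, hG, hGT⟩ := exists_isBoundedDistortionLift_arrIter hlam Tarr n k
  exact hG.map_volume_le (continuous_arrIter Tarr n k).measurable hGT

theorem arrIter_const (T : CM lam Astar) (n k : ℕ) :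
    arrIter (fun _ _ => T) n k = T.toMap^[k] := by
  induction k with
  | zero => rfl
  | succ k ih => rw [arrIter, ih, Function.iterate_succ']

theorem CM.preErgodic_toMap (hlam : 1 < lam) (T : CM lam Astar) :
    PreErgodic T.toMap (volume : Measure Circle1) := by
  refine preErgodic_of_isBoundedDistortionLift_iterate (κ := Astar / (lam * (lam - 1)))
    (tendsto_pow_atTop_atTop_of_one_lt hlam) fun k => ?_
  simpa only [arrIter_const] using exists_isBoundedDistortionLift_arrIter hlam (fun _ _ => T) 0 k

namespace IsSRBDensity

variable {T : CM lam Astar} {ρ : Circle1 → ℝ}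

theorem volume_absolutelyContinuous (hρ : IsSRBDensity T ρ) :
    (volume : Measure Circle1) ≪ volume.withDensity fun x => ENNReal.ofReal (ρ x) := by
  refine withDensity_absolutelyContinuous' hρ.1.1.aemeasurable.ennreal_ofReal ?_
  filter_upwards [hρ.2.1] with x hx
  simpa using hx

theorem ergodic (hρ : IsSRBDensity T ρ) (hlam : 1 < lam) :
    Ergodic T.toMap (volume.withDensity fun x => ENNReal.ofReal (ρ x)) where
  measurable := T.continuous_toMap.measurable
  map_eq := hρ.2.2
  aeconst_set _ hs h_inv := ((T.preErgodic_toMap hlam).aeconst_set hs h_inv).anti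
    (withDensity_absolutelyContinuous _ _).ae_le

theorem tendsto_integral_abs_birkhoffAverage_sub (hρ : IsSRBDensity T ρ) (hlam : 1 < lam)
    {g : Circle1 → ℝ} {B : ℝ} (hg : Measurable g) (hB : ∀ x, |g x| ≤ B) :
    Tendsto (fun N => ∫ x, |birkhoffAverage ℝ T.toMap g N x - ∫ y, g y * ρ y|) atTop (𝓝 0) := by
  have := isProbabilityMeasure_withDensity_ofReal hρ.1.1 hρ.1.2.2 hρ.1.2.1
  have h_mean : ∫ y, g y * ρ y = ∫ y, g y ∂volume.withDensity fun x => ENNReal.ofReal (ρ x) := by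
    rw [integral_withDensity_ofReal hρ.1.1.aemeasurable hρ.1.2.2]
    simp only [smul_eq_mul, mul_comm]
  rw [h_mean]
  exact tendsto_integral_abs_birkhoffAverage_sub_of_ergodic hρ.volume_absolutelyContinuous
    (hρ.ergodic hlam) hg hB

end IsSRBDensity

end Compositions

/-! ### Paths of triangular arrays of circle maps -/

section TriangularArrays

theorem floor_natCast_mul_projIcc_div {n : ℕ} (hn : 0 < n) (k : ℕ) :
    ⌊(n : ℝ) * (projIcc (0 : ℝ) 1 zero_le_one (k / n) : ℝ)⌋₊ = min k n := by
  have hn' : (0 : ℝ) < n := by exact_mod_cast hn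
  have h_clamp : (projIcc (0 : ℝ) 1 zero_le_one (k / n) : ℝ) = (min k n : ℕ) / n := by
    rw [coe_projIcc, max_eq_right (by positivity), min_comm, Nat.cast_min,
      ← min_div_div_right hn'.le, div_self hn'.ne']
  rw [h_clamp, mul_div_cancel₀ _ hn'.ne', Nat.floor_natCast]

theorem abs_polygonalPath_sub_polygonalPath_le (a b : ℕ → ℝ) (n : ℕ) {t : ℝ}
    (ht : t ∈ Icc (0 : ℝ) 1) :
    |polygonalPath n a t - polygonalPath n b t| ≤
      (n : ℝ)⁻¹ * (2 * ∑ k ∈ Finset.range (n + 1), |a k - b k|) := by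
  have h_floor := floor_natCast_mul_le n ht.2
  rw [polygonalPath, polygonalPath, ← mul_sub, abs_mul, abs_of_nonneg (by positivity),
    add_sub_add_comm, ← mul_sub, ← Finset.sum_sub_distrib, two_mul]
  refine mul_le_mul_of_nonneg_left ((abs_add_le _ _).trans (add_le_add ?_ ?_)) (by positivity)
  · exact (Finset.abs_sum_le_sum_abs _ _).trans <| Finset.sum_le_sum_of_subset_of_nonneg
      (Finset.range_mono (by lia)) fun _ _ _ => abs_nonneg _
  · rw [abs_mul, abs_of_nonneg (Int.fract_nonneg _)]
    refine (mul_le_of_le_one_left (abs_nonneg _) (Int.fract_lt_one _).le).trans ?_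
    exact Finset.single_le_sum (f := fun k => |a k - b k|) (fun _ _ => abs_nonneg _)
      (Finset.mem_range.2 (by lia))

theorem continuous_pathOf_polygonalPath {X : Type*} [TopologicalSpace X] {g : ℕ → X → ℝ}
    (hg : ∀ k, Continuous (g k)) (n : ℕ) :
    Continuous fun x => pathOf (polygonalPath n fun k => g k x) := by
  refine continuous_iff_continuousAt.2 fun y => tendsto_iff_edist_tendsto_0.2 ?_
  have h_bound : Continuous fun x => ENNReal.ofReal
      ((n : ℝ)⁻¹ * (2 * ∑ k ∈ Finset.range (n + 1), |g k x - g k y|)) :=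
    ENNReal.continuous_ofReal.comp (by fun_prop)
  have h_lim := h_bound.tendsto y
  simp only [sub_self, abs_zero, Finset.sum_const_zero, mul_zero, ENNReal.ofReal_zero] at h_lim
  exact tendsto_of_tendsto_of_tendsto_of_le_of_le tendsto_const_nhds h_lim (fun _ => zero_le)
    fun x => edist_pathOf_le fun t ht => abs_polygonalPath_sub_polygonalPath_le _ _ n ht

theorem pathOf_congr {g₁ g₂ : ℝ → ℝ} (h : EqOn g₁ g₂ (Icc 0 1)) : pathOf g₁ = pathOf g₂ :=
  funext fun t => h t.2

variable {lam Astar η : ℝ} {γ : ℝ → CM lam Astar} {Tarr : ℕ → ℕ → CM lam Astar}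
  {f : Circle1 → ℝ} {ρhat : ℝ → Circle1 → ℝ}

theorem continuous_pathOf_zetaP (Tarr : ℕ → ℕ → CM lam Astar) (hf : Continuous f) (n : ℕ) :
    Continuous fun x => pathOf (zetaP Tarr f n x) :=
  continuous_pathOf_polygonalPath (fun k => hf.comp (continuous_arrIter Tarr n k)) n

theorem dist_toMap_le_dC1 (T₁ T₂ : CM lam Astar) (x : Circle1) :
    dist (T₁.toMap x) (T₂.toMap x) ≤ dC1 T₁ T₂ := by
  have h_bdd : BddAbove (range fun x => dist (T₁.toMap x) (T₂.toMap x)) :=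
    (isCompact_range (T₁.continuous_toMap.dist T₂.continuous_toMap)).bddAbove
  exact (le_ciSup h_bdd x).trans
    (le_add_of_nonneg_right (Real.iSup_nonneg fun _ => abs_nonneg _))

theorem HolderCurve.continuousOn_toMap (hη : 0 < η) (hγ : HolderCurve η γ) :
    ContinuousOn (fun p : ℝ × Circle1 => (γ p.1).toMap p.2) (Icc 0 1 ×ˢ univ) := by
  obtain ⟨H, hH⟩ := hγ
  rintro ⟨t, x⟩ ⟨ht, -⟩
  have h_bound : Continuous fun p : ℝ × Circle1 =>
      H * |p.1 - t| ^ η + dist ((γ t).toMap p.2) ((γ t).toMap x) := by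
    have := (γ t).continuous_toMap
    fun_prop (disch := exact hη.le)
  have h_lim := h_bound.tendsto (t, x)
  simp only [sub_self, abs_zero, Real.zero_rpow hη.ne', mul_zero, dist_self, add_zero] at h_lim
  refine tendsto_iff_dist_tendsto_zero.2 (squeeze_zero' (Eventually.of_forall fun _ => dist_nonneg)
    ?_ (h_lim.mono_left nhdsWithin_le_nhds))
  filter_upwards [self_mem_nhdsWithin] with p hp
  calc dist ((γ p.1).toMap p.2) ((γ t).toMap x)
      ≤ dist ((γ p.1).toMap p.2) ((γ t).toMap p.2) + dist ((γ t).toMap p.2) ((γ t).toMap x) :=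
        dist_triangle _ _ _
    _ ≤ H * |p.1 - t| ^ η + dist ((γ t).toMap p.2) ((γ t).toMap x) := by
        gcongr
        exact (dist_toMap_le_dC1 _ _ _).trans (hH _ hp.1 _ ht)

theorem ArrayApprox.tendstoUniformlyOn_toMap (hη : 0 < η) (hT : ArrayApprox η γ Tarr) :
    TendstoUniformlyOn (fun n (p : ℝ × Circle1) => (Tarr n ⌊(n : ℝ) * p.1⌋₊).toMap p.2)
      (fun p => (γ p.1).toMap p.2) atTop (Icc 0 1 ×ˢ univ) := by
  obtain ⟨M, hM⟩ := hT
  refine Metric.tendstoUniformlyOn_iff.2 fun ε hε => ?_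
  have h_rate : Tendsto (fun n : ℕ => M / (n : ℝ) ^ η) atTop (𝓝 0) :=
    ((tendsto_rpow_atTop hη).comp tendsto_natCast_atTop_atTop).const_div_atTop M
  filter_upwards [h_rate.eventually_lt_const hε, eventually_ge_atTop 1] with n h_small hn p hp
  rw [dist_comm]
  refine (dist_toMap_le_dC1 _ _ _).trans_lt (lt_of_le_of_lt ?_ h_small)
  exact (le_div_iff₀' (by positivity)).2 (hM n hn _ hp.1)

/-- The array which follows `Tarr` up to the index `k = n` and is constant afterwards. It makes
sense of the orbit at all times `k / n`, the times in `[0, 1]` being unaffected. -/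
def stopArray (Tarr : ℕ → ℕ → CM lam Astar) (n k : ℕ) : CM lam Astar := Tarr n (min k n)

theorem arrIter_stopArray (Tarr : ℕ → ℕ → CM lam Astar) {n k : ℕ} (hk : k ≤ n) :
    arrIter (stopArray Tarr) n k = arrIter Tarr n k := by
  induction k with
  | zero => rfl
  | succ k ih => rw [arrIter, arrIter, ih (by lia), stopArray, min_eq_left hk]

theorem pathOf_zetaP_eq (Tarr : ℕ → ℕ → CM lam Astar) (f : Circle1 → ℝ) (n : ℕ) (x : Circle1) :
    pathOf (zetaP Tarr f n x) =
      pathOf (polygonalPath n fun k => f (arrIter (stopArray Tarr) n k x)) := by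
  refine pathOf_congr fun t ht => ?_
  have h_floor := floor_natCast_mul_le n ht.2
  have h_sum : ∑ k ∈ Finset.range ⌊(n : ℝ) * t⌋₊, fnk Tarr f n k x =
      ∑ k ∈ Finset.range ⌊(n : ℝ) * t⌋₊, f (arrIter (stopArray Tarr) n k x) :=
    Finset.sum_congr rfl fun k hk => by
      rw [fnk, arrIter_stopArray Tarr ((Finset.mem_range.1 hk).le.trans h_floor)]
  rw [zetaP, polygonalPath, h_sum, fnk, arrIter_stopArray Tarr h_floor]

/-- The curve `γ` on `[0, 1]`, extended to `ℝ` by its end points. -/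
noncomputable def clampedCurve (γ : ℝ → CM lam Astar) (t : ℝ) : CM lam Astar :=
  γ (projIcc (0 : ℝ) 1 zero_le_one t)

theorem uniformContinuous_clampedCurve
    (hγ : ContinuousOn (fun p : ℝ × Circle1 => (γ p.1).toMap p.2) (Icc 0 1 ×ˢ univ)) :
    UniformContinuous (Function.uncurry fun t => (clampedCurve γ t).toMap) := by
  have h_cont : Continuous fun p : Icc (0 : ℝ) 1 × Circle1 => (γ p.1).toMap p.2 :=
    hγ.comp_continuous (f := fun p : Icc (0 : ℝ) 1 × Circle1 => ((p.1 : ℝ), p.2)) (by fun_prop)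
      fun p => ⟨p.1.2, mem_univ _⟩
  exact (CompactSpace.uniformContinuous_of_continuous h_cont).comp
    ((LipschitzWith.projIcc zero_le_one).uniformContinuous.prodMap uniformContinuous_id)

theorem isQuasistaticOrbit_arrIter_stopArray
    (hT : TendstoUniformlyOn (fun n (p : ℝ × Circle1) => (Tarr n ⌊(n : ℝ) * p.1⌋₊).toMap p.2)
      (fun p => (γ p.1).toMap p.2) atTop (Icc 0 1 ×ˢ univ)) :
    IsQuasistaticOrbit (fun t => (clampedCurve γ t).toMap) (arrIter (stopArray Tarr)) := by
  intro ε hε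
  filter_upwards [Metric.tendstoUniformlyOn_iff.1 hT ε hε, eventually_gt_atTop 0]
    with n h_close hn k x
  have h := h_close (projIcc (0 : ℝ) 1 zero_le_one ((k + 1 : ℕ) / n),
    arrIter (stopArray Tarr) n k x) ⟨Subtype.coe_prop _, mem_univ _⟩
  rwa [floor_natCast_mul_projIcc_div hn, dist_comm] at h

theorem tendstoInMeasure_pathOf_zetaP (hlam : 1 < lam)
    (hγ : ContinuousOn (fun p : ℝ × Circle1 => (γ p.1).toMap p.2) (Icc 0 1 ×ˢ univ))
    (hT : TendstoUniformlyOn (fun n (p : ℝ × Circle1) => (Tarr n ⌊(n : ℝ) * p.1⌋₊).toMap p.2)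
      (fun p => (γ p.1).toMap p.2) atTop (Icc 0 1 ×ˢ univ))
    (hf : Continuous f) (hρhat : ∀ t ∈ Icc (0 : ℝ) 1, IsSRBDensity (γ t) (ρhat t)) :
    TendstoInMeasure volume (fun n x => pathOf (zetaP Tarr f n x)) atTop
      fun _ => pathOf fun t => ∫ s in (0 : ℝ)..t, ∫ y, f y * ρhat s y := by
  obtain ⟨B, hB⟩ := isCompact_univ.exists_bound_of_continuousOn hf.continuousOn
  have hB (x : Circle1) : |f x| ≤ B := hB x (mem_univ x)
  have h_limit : (pathOf fun t => ∫ s in (0 : ℝ)..t, ∫ y, f y * ρhat s y) = pathOf fun t =>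
      ∫ s in (0 : ℝ)..t, ∫ y, f y * ρhat (projIcc (0 : ℝ) 1 zero_le_one s) y :=
    pathOf_congr fun t ht => intervalIntegral.integral_congr fun s hs => by
      rw [uIcc_of_le ht.1] at hs
      simp only [projIcc_of_mem zero_le_one (⟨hs.1, hs.2.trans ht.2⟩ : s ∈ Icc (0 : ℝ) 1)]
  refine tendstoInMeasure_of_tendsto_lintegral_edist (fun n =>
    ((continuous_pathOf_zetaP Tarr hf n).edist continuous_const).aemeasurable) ?_
  simp only [pathOf_zetaP_eq Tarr f, h_limit]
  exact (isQuasistaticOrbit_arrIter_stopArray hT).tendsto_lintegral_edist_pathOf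
    (uniformContinuous_clampedCurve hγ) (CompactSpace.uniformContinuous_of_continuous hf) hB
    (fun n k => (continuous_arrIter _ n k).aemeasurable)
    (fun n k => map_arrIter_volume_le hlam (stopArray Tarr) n k)
    fun t => (hρhat _ (Subtype.coe_prop _)).tendsto_integral_abs_birkhoffAverage_sub hlam
      hf.measurable hB

end TriangularArrays

theorem statement15_general {lam Astar : ℝ} (hlam : 1 < lam) (γ : ℝ → CM lam Astar)
    (hγ : ContinuousOn (fun p : ℝ × Circle1 => (γ p.1).toMap p.2) (Icc 0 1 ×ˢ univ))
    (Tarr : ℕ → ℕ → CM lam Astar)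
    (hT : TendstoUniformlyOn (fun n (p : ℝ × Circle1) => (Tarr n ⌊(n : ℝ) * p.1⌋₊).toMap p.2)
      (fun p => (γ p.1).toMap p.2) atTop (Icc 0 1 ×ˢ univ))
    (f : Circle1 → ℝ) (hf : Continuous f)
    (ρhat : ℝ → Circle1 → ℝ) (hρhat : ∀ t ∈ Icc (0 : ℝ) 1, IsSRBDensity (γ t) (ρhat t))
    (ρ : Circle1 → ℝ) (hρ : IsProbDensity ρ) :
    ∀ F : BoundedContinuousFunction PathSpace ℝ,
      Tendsto (fun n : ℕ => ∫ x : Circle1, F (pathOf (zetaP Tarr f n x)) * ρ x) atTop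
        (𝓝 (F (pathOf (fun t => ∫ s in (0 : ℝ)..t, ∫ y : Circle1, f y * ρhat s y)))) := by
  intro F
  obtain ⟨hρ_int, hρ_one, hρ_nonneg⟩ := hρ
  have := isProbabilityMeasure_withDensity_ofReal hρ_int hρ_nonneg hρ_one
  have h_lim := tendsto_integral_comp_of_tendstoInMeasure
    (withDensity_absolutelyContinuous volume fun x => ENNReal.ofReal (ρ x))
    (tendstoInMeasure_pathOf_zetaP hlam hγ hT hf hρhat) F.continuous
    (fun n => (F.continuous.comp (continuous_pathOf_zetaP Tarr hf n)).aestronglyMeasurable)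
    fun n x => F.norm_coe_le_norm _
  rw [integral_const, probReal_univ, one_smul] at h_lim
  simpa only [integral_withDensity_ofReal hρ_int.aemeasurable hρ_nonneg, smul_eq_mul,
    mul_comm] using h_lim

/-- Proposition `prop:meanLip`.  If `f` is Lipschitz and `μ` has a strictly
positive Lipschitz density, then the laws of the paths `t ↦ ζₙ(x,t)` converge weakly on
`C⁰([0,1],ℝ)` to the point mass at `ζ(t) = ∫₀ᵗ μ̂ₛ(f) ds`.  (Weak convergence is expressed by
testing against all bounded continuous functions on the path space.) -/
theorem statement15 {lam Astar : ℝ} (hlam : 1 < lam) (hA : 0 < Astar)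
    {η : ℝ} (hη : η ∈ Set.Ioo (0 : ℝ) 1)
    (γ : ℝ → CM lam Astar) (hγ : HolderCurve η γ)
    (Tarr : ℕ → ℕ → CM lam Astar) (hT : ArrayApprox η γ Tarr)
    (f : Circle1 → ℝ) (hf : ∃ K : NNReal, LipschitzWith K f)
    (ρhat : ℝ → Circle1 → ℝ) (hρhat : ∀ t ∈ Set.Icc (0 : ℝ) 1, IsSRBDensity (γ t) (ρhat t))
    (ρ : Circle1 → ℝ) (hρ : IsProbDensity ρ) (hρpos : ∀ x, 0 < ρ x)
    (hρlip : ∃ K : NNReal, LipschitzWith K ρ) :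
    ∀ F : BoundedContinuousFunction PathSpace ℝ,
      Tendsto (fun n : ℕ => ∫ x : Circle1, F (pathOf (zetaP Tarr f n x)) * ρ x)
        atTop
        (𝓝 (F (pathOf (fun t => ∫ s in (0:ℝ)..t, ∫ y : Circle1, f y * ρhat s y)))) :=
  statement15_general hlam γ (hγ.continuousOn_toMap hη.1) Tarr (hT.tendstoUniformlyOn_toMap hη.1)
    f hf.choose_spec.continuous ρhat hρhat ρ hρ
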